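/- Let n ≥ 3 be an odd positive integer. Then s_{nℕ}(D_{2n}) = 2n + ⌊log₂ n⌋. -/

import Mathlib

/-- `T` is a 1-product sequence: its terms can be ordered so that their product is `1`. -/
def IsOneProdSeq {G : Type*} [Group G] (T : Multiset G) : Prop :=
  ∃ l : List G, (l : Multiset G) = T ∧ l.prod = 1

/-!
Code the rotation `r a` by `(0, a)` and the reflection `sr a` by `(1, a)` in `ℤ × ℤ/n`. Inverting a
rotation means carrying it past a reflection, so a sequence containing a reflection is a 1-product
sequence if and only if some signed sum of its codes vanishes.

For the upper bound, take a subgroup `H` of `ℤ/n`, maximal with the property that some set `E` of at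
most `2|H| - 2` terms absorbs `H`: every `(0, g)` with `g ∈ H` is a signed sum over `E`. A sequence
of `|Q| - 1` nonzero elements of an abelian group `Q ≠ 0` of odd order contains fewer than `|L|`
terms whose signed sums cover some subgroup `L ≠ 0`. With `Q = (ℤ/n)/H`, maximality therefore leaves
few rotations outside `H` and, if there are many reflections, places all but a few of them in one
class modulo `H`. It remains to find a set of the right size, `n` or `2n`, whose signed sum lies in
`0 × H`; it is built from pairs of reflections in the same class, from the rotations in `H`, or, by
pigeonhole, from subsets of about `log₂` of the index of `H` many terms.

For the lower bound, take the rotations by `1, 2, 4, …, 2 ^ (⌊log₂ n⌋ - 1)` and `2n - 1` copies of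
one reflection. By uniqueness of binary expansions a 1-product subsequence contains no rotation, so
its length is even, and it is smaller than `2n`.
-/

open Finset
open scoped Pointwise symmDiff

section SignedSums

variable {ι κ M N : Type*} [AddCommGroup M] [AddCommGroup N] {w : ι → M} {E F : Finset ι} {y z : M}

/-- `z` is a signed sum of the family `w` over `E`: a sum of all the `w i` with `i ∈ E`, each taken
with a sign `+1` or `-1`. -/
def IsSignedSum (w : ι → M) (E : Finset ι) (z : M) : Prop :=
  ∃ ε : ι → ℤˣ, ∑ i ∈ E, ε i • w i = z

namespace IsSignedSum

theorem empty (w : ι → M) : IsSignedSum w ∅ 0 :=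
  ⟨1, sum_empty⟩

theorem singleton (w : ι → M) (i : ι) : IsSignedSum w {i} (w i) :=
  ⟨1, by simp⟩

theorem units_smul (h : IsSignedSum w E z) (u : ℤˣ) : IsSignedSum w E (u • z) := by
  obtain ⟨ε, rfl⟩ := h
  exact ⟨fun i => u * ε i, by simp only [mul_smul, smul_sum]⟩

theorem neg (h : IsSignedSum w E z) : IsSignedSum w E (-z) := by
  simpa using h.units_smul (-1)

theorem add [DecidableEq ι] (hE : IsSignedSum w E y) (hF : IsSignedSum w F z)
    (hEF : Disjoint E F) : IsSignedSum w (E ∪ F) (y + z) := by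
  obtain ⟨ε, rfl⟩ := hE
  obtain ⟨δ, rfl⟩ := hF
  refine ⟨fun i => if i ∈ E then ε i else δ i, ?_⟩
  rw [sum_union hEF]
  congr 1
  · exact sum_congr rfl fun i hi => by simp [hi]
  · exact sum_congr rfl fun i hi => by simp [disjoint_right.1 hEF hi]

theorem pair_sub [DecidableEq ι] {i j : ι} (hij : i ≠ j) : IsSignedSum w {i, j} (w i - w j) := by
  rw [sub_eq_add_neg]
  exact (singleton w i).add (singleton w j).neg (disjoint_singleton.2 hij)

theorem of_subset [DecidableEq ι] (h : F ⊆ E) : IsSignedSum w E (∑ i ∈ E \ F, w i - ∑ i ∈ F, w i) :=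
  ⟨fun i => if i ∈ F then -1 else 1, by
    rw [← sum_sdiff h, sub_eq_add_neg, ← sum_neg_distrib]
    congr 1
    · exact sum_congr rfl fun i hi => by simp [(mem_sdiff.1 hi).2]
    · exact sum_congr rfl fun i hi => by simp [hi]⟩

theorem symmDiff [DecidableEq ι] (w : ι → M) (E F : Finset ι) :
    IsSignedSum w (E ∆ F) (∑ i ∈ E, w i - ∑ i ∈ F, w i) := by
  have h : E ∆ F \ (F \ E) = E \ F :=
    union_sdiff_cancel_right (disjoint_sdiff_sdiff)
  rw [← sum_sdiff_sub_sum_sdiff, ← h]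
  exact of_subset subset_union_right

theorem exists_subset [DecidableEq ι] (h : IsSignedSum w E z) :
    ∃ F ⊆ E, ∑ i ∈ E \ F, w i - ∑ i ∈ F, w i = z := by
  obtain ⟨ε, rfl⟩ := h
  refine ⟨E.filter fun i => ε i = -1, filter_subset _ _, ?_⟩
  rw [← filter_not, sub_eq_add_neg, ← sum_neg_distrib,
    ← sum_filter_add_sum_filter_not E fun i => ε i = -1, add_comm]
  congr 1
  · exact sum_congr rfl fun i hi => by simp [(mem_filter.1 hi).2]
  · refine sum_congr rfl fun i hi => ?_
    rw [(Int.units_eq_one_or (ε i)).resolve_right (mem_filter.1 hi).2, one_smul]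

theorem mem (h : IsSignedSum w E z) {K : AddSubgroup M} (hK : ∀ i ∈ E, w i ∈ K) : z ∈ K := by
  obtain ⟨ε, rfl⟩ := h
  exact K.sum_mem fun i hi => K.zsmul_mem (hK i hi) _

theorem map (h : IsSignedSum w E z) (φ : M →+ N) : IsSignedSum (φ ∘ w) E (φ z) := by
  obtain ⟨ε, rfl⟩ := h
  exact ⟨ε, by simp [Units.smul_def]⟩

theorem exists_of_map {φ : M →+ N} {x : N} (h : IsSignedSum (φ ∘ w) E x) :
    ∃ z, IsSignedSum w E z ∧ φ z = x := by
  obtain ⟨ε, rfl⟩ := h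
  exact ⟨_, ⟨ε, rfl⟩, by simp [Units.smul_def]⟩

theorem biUnion [DecidableEq ι] {U : κ → Finset ι} {v : κ → M} {J : Finset κ}
    (h : IsSignedSum v J z) (hv : ∀ j ∈ J, IsSignedSum w (U j) (v j))
    (hU : (J : Set κ).PairwiseDisjoint U) : IsSignedSum w (J.biUnion U) z := by
  classical
  obtain ⟨ε, rfl⟩ := h
  induction J using Finset.induction_on with
  | empty => exact empty w
  | insert j J hj ih =>
    rw [sum_insert hj, biUnion_insert]
    rw [coe_insert, Set.pairwiseDisjoint_insert_of_notMem (mod_cast hj)] at hU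
    refine ((hv j (mem_insert_self j J)).units_smul (ε j)).add
      (ih (fun k hk => hv k (mem_insert_of_mem hk)) hU.1) ?_
    exact (disjoint_biUnion_right _ _ _).2 fun k hk => hU.2 k hk

theorem abs_le_card {w : ι → ℤ} {z : ℤ} (h : IsSignedSum w E z) (hw : ∀ i ∈ E, |w i| ≤ 1) :
    |z| ≤ #E := by
  obtain ⟨ε, rfl⟩ := h
  calc |∑ i ∈ E, ε i • w i| ≤ ∑ i ∈ E, |ε i • w i| := abs_sum_le_sum_abs _ _
    _ ≤ ∑ i ∈ E, 1 := sum_le_sum fun i hi => by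
      rcases Int.units_eq_one_or (ε i) with h | h <;> simpa [h] using hw i hi
    _ = #E := by simp

theorem even_card_sub {w : ι → ℤ} {z : ℤ} (h : IsSignedSum w E z) (hw : ∀ i ∈ E, w i = 1) :
    Even ((#E : ℤ) - z) := by
  obtain ⟨ε, rfl⟩ := h
  rw [card_eq_sum_ones, Nat.cast_sum, ← sum_sub_distrib]
  refine even_sum _ fun i hi => ?_
  rcases Int.units_eq_one_or (ε i) with h | h <;> simp [h, hw i hi]

end IsSignedSum

/-- Some signed sum of the family `w` over `E` lies in the subgroup `K`. -/
def HasSignedSumIn (w : ι → M) (K : AddSubgroup M) (E : Finset ι) : Prop :=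
  ∃ z ∈ K, IsSignedSum w E z

namespace HasSignedSumIn

variable {K : AddSubgroup M}

theorem empty (w : ι → M) (K : AddSubgroup M) : HasSignedSumIn w K ∅ :=
  ⟨0, K.zero_mem, .empty w⟩

theorem of_forall_mem (h : ∀ i ∈ E, w i ∈ K) : HasSignedSumIn w K E :=
  ⟨∑ i ∈ E, w i, K.sum_mem h, 1, by simp⟩

theorem union [DecidableEq ι] (hE : HasSignedSumIn w K E) (hF : HasSignedSumIn w K F)
    (hEF : Disjoint E F) : HasSignedSumIn w K (E ∪ F) := by
  obtain ⟨y, hy, hEy⟩ := hE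
  obtain ⟨z, hz, hFz⟩ := hF
  exact ⟨y + z, K.add_mem hy hz, hEy.add hFz hEF⟩

theorem pair [DecidableEq ι] {i j : ι} (hij : i ≠ j) (h : w i - w j ∈ K) :
    HasSignedSumIn w K {i, j} :=
  ⟨w i - w j, h, .pair_sub hij⟩

end HasSignedSumIn

end SignedSums

theorem two_pow_le_centralBinom (k : ℕ) : 2 ^ k ≤ k.centralBinom := by
  induction k with
  | zero => simp
  | succ k ih =>
    refine Nat.le_of_mul_le_mul_left ?_ k.succ_pos
    calc (k + 1) * 2 ^ (k + 1) = 2 * (k + 1) * 2 ^ k := by ring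
      _ ≤ 2 * (2 * k + 1) * k.centralBinom := by gcongr; omega
      _ = (k + 1) * (k + 1).centralBinom := (Nat.succ_mul_centralBinom_succ k).symm

section Pigeonhole

variable {ι M : Type*} [AddCommGroup M] (w : ι → M) {K : AddSubgroup M}

theorem exists_sum_sub_sum_mem_of_index_lt_card [K.FiniteIndex] {𝒮 : Finset (Finset ι)}
    (h : K.index < #𝒮) : ∃ B ∈ 𝒮, ∃ C ∈ 𝒮, B ≠ C ∧ ∑ i ∈ B, w i - ∑ i ∈ C, w i ∈ K := by
  have := Fintype.ofFinite (M ⧸ K)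
  have hcard : #(univ : Finset (M ⧸ K)) < #𝒮 := by
    rwa [card_univ, ← Nat.card_eq_fintype_card, ← AddSubgroup.index_eq_card]
  obtain ⟨B, hB, C, hC, hBC, heq⟩ := exists_ne_map_eq_of_card_lt_of_maps_to hcard
    (f := fun B => ((∑ i ∈ B, w i : M) : M ⧸ K)) fun _ _ => mem_coe.2 (mem_univ _)
  exact ⟨C, hC, B, hB, hBC.symm, (QuotientAddGroup.eq_iff_sub_mem).1 heq.symm⟩

theorem exists_hasSignedSumIn_of_index_lt_two_pow [K.FiniteIndex] {Y : Finset ι}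
    (h : K.index < 2 ^ #Y) : ∃ J ⊆ Y, J.Nonempty ∧ HasSignedSumIn w K J := by
  classical
  rw [← card_powerset] at h
  obtain ⟨B, hB, C, hC, hBC, hmem⟩ := exists_sum_sub_sum_mem_of_index_lt_card w h
  exact ⟨B ∆ C, symmDiff_subset_union.trans (union_subset (mem_powerset.1 hB) (mem_powerset.1 hC)),
    symmDiff_nonempty.2 hBC, _, hmem, .symmDiff w B C⟩

end Pigeonhole

section BalancedPigeonhole

variable {ι A : Type*} [AddCommGroup A] {w : ι → ℤ × A} {H : AddSubgroup A}

theorem exists_hasSignedSumIn_bot_prod [H.FiniteIndex] {Y : Finset ι} {k : ℕ}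
    (hY : ∀ i ∈ Y, (w i).1 = 1) (hk : 2 * k ≤ #Y) (hH : H.index < 2 ^ k) :
    ∃ J ⊆ Y, J.Nonempty ∧ #J ≤ 2 * k ∧ HasSignedSumIn w ((⊥ : AddSubgroup ℤ).prod H) J := by
  classical
  -- Comparing only subsets of size `k` makes the first coordinates cancel.
  obtain ⟨Y', hY'Y, hY'⟩ := exists_subset_card_eq hk
  have hcard : H.index < #(Y'.powersetCard k) := by
    rw [card_powersetCard, hY', ← Nat.centralBinom_eq_two_mul_choose]
    exact hH.trans_le (two_pow_le_centralBinom k)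
  obtain ⟨B, hB, C, hC, hBC, hmem⟩ :=
    exists_sum_sub_sum_mem_of_index_lt_card (fun i => (w i).2) hcard
  rw [mem_powersetCard] at hB hC
  have hfst (D : Finset ι) (hD : D ⊆ Y' ∧ #D = k) : (∑ i ∈ D, w i).1 = k := by
    rw [Prod.fst_sum, sum_congr rfl fun i hi => hY i (hY'Y (hD.1 hi))]
    simp [hD.2]
  have hsub : B ∆ C ⊆ Y' := symmDiff_subset_union.trans (union_subset hB.1 hC.1)
  refine ⟨B ∆ C, hsub.trans hY'Y, symmDiff_nonempty.2 hBC, hY' ▸ card_le_card hsub,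
    _, AddSubgroup.mem_prod.2 ⟨?_, ?_⟩, .symmDiff w B C⟩
  · simp [hfst B hB, hfst C hC]
  · simpa [Prod.snd_sum] using hmem

end BalancedPigeonhole

section Selection

variable {ι α M : Type*} [AddCommGroup M]

theorem exists_subset_le_card_lt [DecidableEq ι] {P : Finset ι → Prop} {s : Finset ι} {d : ℕ}
    (q : ℕ) (hd : 0 < d) (h0 : P ∅)
    (hstep : ∀ t ⊆ s, P t → #t < q → ∃ b ⊆ s \ t, b.Nonempty ∧ #b ≤ d ∧ P (t ∪ b)) :
    ∃ t ⊆ s, P t ∧ q ≤ #t ∧ #t < q + d := by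
  induction q with
  | zero => exact ⟨∅, empty_subset s, h0, by simp, by simpa using hd⟩
  | succ q ih =>
    obtain ⟨t, hts, hPt, hqt, htq⟩ := ih fun t hts hPt htq => hstep t hts hPt (by omega)
    rcases hqt.lt_or_eq with hlt | heq
    · exact ⟨t, hts, hPt, hlt, by omega⟩
    obtain ⟨b, hb, hb0, hbd, hPb⟩ := hstep t hts hPt (by omega)
    have hcard : #(t ∪ b) = #t + #b :=
      card_union_of_disjoint (disjoint_sdiff.mono_right hb)
    have := hb0.card_pos
    exact ⟨t ∪ b, union_subset hts (hb.trans sdiff_subset), hPb, by omega, by omega⟩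

theorem exists_card_eq_two_mul_hasSignedSumIn [DecidableEq α] {w : ι → M} {K : AddSubgroup M}
    {f : ι → α} {F : Finset ι} {p : ℕ} (hf : ∀ i ∈ F, ∀ j ∈ F, f i = f j → w i - w j ∈ K)
    (hp : 2 * p + #(F.image f) ≤ #F + 1) : ∃ D ⊆ F, #D = 2 * p ∧ HasSignedSumIn w K D := by
  classical
  induction p with
  | zero => exact ⟨∅, empty_subset F, rfl, .empty w K⟩
  | succ p ih =>
    obtain ⟨D, hDF, hD, hDK⟩ := ih (by omega)
    have hcard : #(F.image f) < #(F \ D) := by rw [card_sdiff_of_subset hDF]; omega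
    obtain ⟨i, hi, j, hj, hij, heq⟩ := exists_ne_map_eq_of_card_lt_of_maps_to hcard
      fun i hi => mem_image_of_mem f (mem_sdiff.1 hi).1
    rw [mem_sdiff] at hi hj
    have hdisj : Disjoint D {i, j} := by simp [hi.2, hj.2]
    refine ⟨D ∪ {i, j}, ?_, ?_, hDK.union (.pair hij (hf i hi.1 j hj.1 heq)) hdisj⟩
    · simp [insert_subset_iff, hDF, hi.1, hj.1]
    · rw [card_union_of_disjoint hdisj, hD, card_pair hij]
      ring

theorem exists_ne_forall_le_card_filter_sdiff [DecidableEq ι] [DecidableEq α] {f : ι → α}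
    {F : Finset ι} {k : ℕ} (hF : 2 * (k + 1) ≤ #F) (hf : ∀ a, k + 1 ≤ #{i ∈ F | f i ≠ a}) :
    ∃ i ∈ F, ∃ j ∈ F, f i ≠ f j ∧ ∀ a, k ≤ #{x ∈ F \ {i, j} | f x ≠ a} := by
  -- `i` is taken in a largest class of `f`, so that any third class has at most `(#F - 1) / 2`
  -- elements.
  obtain ⟨i, hi, hmax⟩ := exists_max_image F (fun i => #{x ∈ F | f x = f i})
    (card_pos.1 (by omega))
  obtain ⟨j, hj⟩ := card_pos.1 (k.succ_pos.trans_le (hf (f i)))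
  rw [mem_filter] at hj
  refine ⟨i, hi, j, hj.1, hj.2.symm, fun a => ?_⟩
  have hsdiff : {x ∈ F \ {i, j} | f x ≠ a} =
      {x ∈ F | f x ≠ a} \ {x ∈ ({i, j} : Finset ι) | f x ≠ a} := by
    ext; simp only [mem_filter, mem_sdiff]; tauto
  have hle := le_card_sdiff {x ∈ ({i, j} : Finset ι) | f x ≠ a} {x ∈ F | f x ≠ a}
  rw [hsdiff]
  by_cases hmeet : f i = a ∨ f j = a
  · have hone : #{x ∈ ({i, j} : Finset ι) | f x ≠ a} ≤ 1 := by
      rw [card_le_one]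
      grind
    have := hf a
    omega
  · push Not at hmeet
    have htwo : #{x ∈ ({i, j} : Finset ι) | f x ≠ a} ≤ 2 :=
      (card_filter_le _ _).trans card_le_two
    have hclass : #{x ∈ F | f x = a} ≤ #{x ∈ F | f x = f i} := by
      rcases eq_empty_or_nonempty {x ∈ F | f x = a} with h | ⟨x, hx⟩
      · simp [h]
      · rw [mem_filter] at hx
        exact hx.2 ▸ hmax x hx.1
    have hother : #{x ∈ F | f x = f i} < #{x ∈ F | f x ≠ a} := by
      refine card_lt_card ((ssubset_iff_of_subset fun x hx => ?_).2 ⟨j, ?_, ?_⟩)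
      · rw [mem_filter] at hx ⊢
        exact ⟨hx.1, hx.2 ▸ hmeet.1⟩
      · exact mem_filter.2 ⟨hj.1, hmeet.2⟩
      · simp [hj.2]
    have hsplit : #{x ∈ F | f x = a} + #{x ∈ F | f x ≠ a} = #F :=
      card_filter_add_card_filter_not _
    omega

theorem exists_pairwiseDisjoint_pairs_ne [DecidableEq ι] [DecidableEq α] {f : ι → α}
    {F : Finset ι} {k : ℕ} (hF : 2 * k ≤ #F) (hf : ∀ a, k ≤ #{i ∈ F | f i ≠ a}) :
    ∃ 𝒰 : Finset (Finset ι), #𝒰 = k ∧ (𝒰 : Set (Finset ι)).PairwiseDisjoint id ∧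
      ∀ U ∈ 𝒰, ∃ i ∈ F, ∃ j ∈ F, f i ≠ f j ∧ U = {i, j} := by
  induction k generalizing F with
  | zero => exact ⟨∅, by simp⟩
  | succ k ih =>
    obtain ⟨i, hi, j, hj, hij, hk⟩ := exists_ne_forall_le_card_filter_sdiff hF hf
    obtain ⟨𝒰, h𝒰k, h𝒰, hpairs⟩ := ih (F := F \ {i, j})
      (by have := le_card_sdiff {i, j} F; have := card_le_two (a := i) (b := j); omega) hk
    have hdisj (U) (hU : U ∈ 𝒰) : Disjoint {i, j} U := by
      obtain ⟨x, hx, y, hy, -, rfl⟩ := hpairs U hU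
      exact disjoint_sdiff.mono_right (insert_subset hx (singleton_subset_iff.2 hy))
    have hnotMem : {i, j} ∉ 𝒰 := fun h => by simpa using hdisj _ h
    refine ⟨insert {i, j} 𝒰, by rw [card_insert_of_notMem hnotMem, h𝒰k], ?_, fun U hU => ?_⟩
    · rw [coe_insert, Set.pairwiseDisjoint_insert_of_notMem (mod_cast hnotMem)]
      exact ⟨h𝒰, hdisj⟩
    · rcases mem_insert.1 hU with rfl | hU
      · exact ⟨i, hi, j, hj, hij, rfl⟩
      · obtain ⟨x, hx, y, hy, hxy, rfl⟩ := hpairs U hU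
        exact ⟨x, (mem_sdiff.1 hx).1, y, (mem_sdiff.1 hy).1, hxy, rfl⟩

end Selection

section SubsetSums

variable {ι Q : Type*} [AddCommGroup Q] [DecidableEq Q] {x : ι → Q} {I J : Finset ι}

/-- The subset sums of the family `x` over `J`, the empty sum included. -/
def subsetSums (x : ι → Q) (J : Finset ι) : Finset Q :=
  J.powerset.image fun B => ∑ i ∈ B, x i

theorem mem_subsetSums {g : Q} : g ∈ subsetSums x J ↔ ∃ B ⊆ J, ∑ i ∈ B, x i = g := by
  simp [subsetSums]

theorem zero_mem_subsetSums : 0 ∈ subsetSums x J :=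
  mem_subsetSums.2 ⟨∅, empty_subset J, sum_empty⟩

theorem mem_subsetSums_of_mem {i : ι} (hi : i ∈ J) : x i ∈ subsetSums x J :=
  mem_subsetSums.2 ⟨{i}, singleton_subset_iff.2 hi, sum_singleton _ _⟩

theorem subsetSums_subset {L : AddSubgroup Q} (h : ∀ i ∈ J, x i ∈ L) :
    (subsetSums x J : Set Q) ⊆ L := by
  intro g hg
  obtain ⟨B, hB, rfl⟩ := mem_subsetSums.1 hg
  exact L.sum_mem fun i hi => h i (hB hi)

theorem subsetSums_insert [DecidableEq ι] {i : ι} (hi : i ∉ J) :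
    subsetSums x (insert i J) = subsetSums x J ∪ (x i +ᵥ subsetSums x J) := by
  simp only [subsetSums, powerset_insert, image_union, image_image, ← image_vadd]
  congr 1
  refine image_congr fun B hB => ?_
  simp only [Function.comp_apply, vadd_eq_add]
  exact sum_insert fun h => hi (mem_powerset.1 hB h)

variable (x I) in
theorem exists_subset_card_lt_card_subsetSums :
    ∃ J ⊆ I, #J < #(subsetSums x J) ∧
      ∀ i ∈ I, i ∉ J → x i ∈ AddAction.stabilizer Q (subsetSums x J) := by
  classical
  obtain ⟨J, hJ, hmax⟩ := exists_max_image {J ∈ I.powerset | #J < #(subsetSums x J)} card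
    ⟨∅, by simpa using ⟨0, zero_mem_subsetSums⟩⟩
  simp only [mem_filter, mem_powerset] at hJ hmax
  refine ⟨J, hJ.1, hJ.2, fun i hi hiJ => ?_⟩
  rw [AddAction.mem_stabilizer_finset']
  by_contra! h
  obtain ⟨b, hb, hib⟩ := h
  have hlt : #(subsetSums x J) < #(subsetSums x (insert i J)) := by
    rw [subsetSums_insert hiJ]
    refine card_lt_card ((ssubset_iff_of_subset subset_union_left).2 ⟨x i +ᵥ b, ?_, hib⟩)
    exact mem_union_right _ (vadd_mem_vadd_finset hb)
  have hcard := card_insert_of_notMem hiJ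
  have := hmax (insert i J) ⟨insert_subset hi hJ.1, by omega⟩
  omega

theorem card_add_card_stabilizer_le [Finite Q] {S : Finset Q} {L : AddSubgroup Q} (h0 : 0 ∈ S)
    (hSL : (S : Set Q) ⊂ L) :
    #S + Nat.card (AddAction.stabilizer Q S) ≤ Nat.card L := by
  obtain ⟨hsub, g, hgL, hgS⟩ := Set.ssubset_iff_exists.1 hSL
  let T := AddAction.stabilizer Q S
  have hmem {a b : Q} (ha : a ∈ T) : a + b ∈ S ↔ b ∈ S := AddAction.mem_stabilizer_finset.1 ha b
  have hTL (a) (ha : a ∈ T) : a ∈ L := hsub (mem_coe.2 (by simpa using (hmem ha (b := 0)).2 h0))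
  have hcoset : Disjoint (S : Set Q) ((· + g) '' (T : Set Q)) := by
    rw [Set.disjoint_right]
    rintro _ ⟨a, ha, rfl⟩ hagS
    exact hgS ((hmem ha).1 hagS)
  calc #S + Nat.card T = (S : Set Q).ncard + ((· + g) '' (T : Set Q)).ncard := by
        rw [Set.ncard_coe_finset, Set.ncard_image_of_injective _ (add_left_injective g)]; rfl
    _ = ((S : Set Q) ∪ (· + g) '' (T : Set Q)).ncard := (Set.ncard_union_eq hcoset).symm
    _ ≤ (L : Set Q).ncard := by
        refine Set.ncard_le_ncard (Set.union_subset hsub ?_)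
        rintro _ ⟨a, ha, rfl⟩
        exact L.add_mem (hTL a ha) hgL
    _ = Nat.card L := rfl

theorem exists_subsetSums_eq_addSubgroup [Finite Q] (hx : ∀ i ∈ I, x i ≠ 0) (hQ : 1 < Nat.card Q)
    (hI : Nat.card Q ≤ #I + 1) :
    ∃ L : AddSubgroup Q, L ≠ ⊥ ∧ ∃ J ⊆ I, #J < Nat.card L ∧ (subsetSums x J : Set Q) = L := by
  classical
  -- A minimal `L` works: otherwise it can be replaced by the stabilizer of a set of subset sums.
  obtain ⟨L, ⟨hL0, hLI⟩, hmin⟩ := Set.Finite.exists_minimal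
    (s := {L : AddSubgroup Q | L ≠ ⊥ ∧ Nat.card L ≤ #{i ∈ I | x i ∈ L} + 1}) (Set.toFinite _)
    ⟨⊤, by rw [Ne, ← AddSubgroup.card_eq_one, AddSubgroup.card_top]; omega, by simpa using hI⟩
  obtain ⟨J, hJ, hJS, hstab⟩ := exists_subset_card_lt_card_subsetSums x {i ∈ I | x i ∈ L}
  have hSL : (subsetSums x J : Set Q) ⊆ L := subsetSums_subset fun i hi => (mem_filter.1 (hJ hi)).2
  refine ⟨L, hL0, J, hJ.trans (filter_subset _ _), ?_,
    hSL.eq_or_ssubset.resolve_right fun hlt => ?_⟩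
  · refine hJS.trans_le ?_
    rw [← Set.ncard_coe_finset]
    exact Set.ncard_le_ncard hSL
  let T := AddAction.stabilizer Q (subsetSums x J)
  have hcard : #(subsetSums x J) + Nat.card T ≤ Nat.card L :=
    card_add_card_stabilizer_le zero_mem_subsetSums hlt
  have hTpos : 0 < Nat.card T := Nat.card_pos
  have hsub : {i ∈ I | x i ∈ L} \ J ⊆ {i ∈ I | x i ∈ T} := fun i hi => by
    rw [mem_sdiff] at hi
    exact mem_filter.2 ⟨(mem_filter.1 hi.1).1, hstab i hi.1 hi.2⟩
  have hTI : Nat.card T ≤ #{i ∈ I | x i ∈ T} := by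
    have h1 := card_le_card hsub
    have h2 := le_card_sdiff J {i ∈ I | x i ∈ L}
    omega
  have hT0 : T ≠ ⊥ := by
    obtain ⟨i, hi⟩ := card_pos.1 (hTpos.trans_le hTI)
    rw [mem_filter] at hi
    exact fun h => hx i hi.1 (by simpa [h] using hi.2)
  have hTL : T ≤ L := fun a ha => hSL <| mem_coe.2 <| by
    simpa using (AddAction.mem_stabilizer_finset.1 ha 0).2 zero_mem_subsetSums
  have hLT := AddSubgroup.card_le_of_le (hmin ⟨hT0, Nat.le_succ_of_le (by convert hTI)⟩ hTL)
  omega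

end SubsetSums

theorem exists_forall_isSignedSum_addSubgroup {ι Q : Type*} [AddCommGroup Q] [Finite Q]
    {x : ι → Q} {I : Finset ι} (hodd : Odd (Nat.card Q)) (hx : ∀ i ∈ I, x i ≠ 0)
    (hQ : 1 < Nat.card Q) (hI : Nat.card Q ≤ #I + 1) :
    ∃ L : AddSubgroup Q, L ≠ ⊥ ∧ ∃ J ⊆ I, #J < Nat.card L ∧ ∀ g ∈ L, IsSignedSum x J g := by
  classical
  obtain ⟨L, hL0, J, hJI, hJL, hJ⟩ := exists_subsetSums_eq_addSubgroup hx hQ hI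
  refine ⟨L, hL0, J, hJI, hJL, fun g hg => ?_⟩
  have hsum : ∑ i ∈ J, x i ∈ L :=
    L.sum_mem fun i hi => hJ.subset (mem_coe.2 (mem_subsetSums_of_mem hi))
  have hLodd : (Nat.card L).Coprime 2 :=
    (hodd.of_dvd_nat L.card_addSubgroup_dvd_card).coprime_two_right
  obtain ⟨b, hb⟩ := (nsmulCoprime hLodd).surjective ⟨_, L.sub_mem hsum hg⟩
  obtain ⟨B, hBJ, hB⟩ := mem_subsetSums.1 (mem_coe.1 (hJ.superset b.2))
  have htwo : ∑ i ∈ B, x i + ∑ i ∈ B, x i = ∑ i ∈ J, x i - g := by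
    rw [hB]; simpa [two_nsmul] using congrArg Subtype.val hb
  convert IsSignedSum.of_subset (w := x) hBJ using 1
  rw [sum_sdiff_eq_sub hBJ, sub_sub, htwo, sub_sub_cancel]

section Packing

variable {ι A : Type*} [AddCommGroup A] {w : ι → ℤ × A} {H : AddSubgroup A} {X Y : Finset ι}
  {𝒰 𝒱 : Finset (Finset ι)}

/-- A packing in `X` is a family of pairwise disjoint blocks of at most two indices from `X`, each
having a signed sum with first coordinate `0` and second coordinate outside `H`. Such blocks are the
raw material for enlarging the subgroup absorbed by a set of indices. -/
structure IsPacking (w : ι → ℤ × A) (H : AddSubgroup A) (X : Finset ι)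
    (𝒰 : Finset (Finset ι)) : Prop where
  subset : ∀ U ∈ 𝒰, U ⊆ X
  pairwiseDisjoint : (𝒰 : Set (Finset ι)).PairwiseDisjoint id
  card_le_two : ∀ U ∈ 𝒰, #U ≤ 2
  exists_notMem : ∀ U ∈ 𝒰, ∃ x ∉ H, IsSignedSum w U (0, x)

namespace IsPacking

theorem empty : IsPacking w H X ∅ :=
  ⟨by simp, by simp, by simp, by simp⟩

theorem nonempty (h : IsPacking w H X 𝒰) {U : Finset ι} (hU : U ∈ 𝒰) : U.Nonempty := by
  rw [nonempty_iff_ne_empty]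
  rintro rfl
  obtain ⟨x, hx, ε, hε⟩ := h.exists_notMem ∅ hU
  rw [sum_empty, Prod.ext_iff] at hε
  exact hx (by simp [← show 0 = x from hε.2])

theorem disjoint (h𝒰 : IsPacking w H X 𝒰) (h𝒱 : IsPacking w H Y 𝒱) (hXY : Disjoint X Y) :
    Disjoint 𝒰 𝒱 := by
  rw [disjoint_left]
  intro U hU hV
  obtain ⟨i, hi⟩ := h𝒰.nonempty hU
  exact disjoint_left.1 hXY (h𝒰.subset U hU hi) (h𝒱.subset U hV hi)

theorem union [DecidableEq ι] (h𝒰 : IsPacking w H X 𝒰) (h𝒱 : IsPacking w H Y 𝒱)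
    (hXY : Disjoint X Y) : IsPacking w H (X ∪ Y) (𝒰 ∪ 𝒱) where
  subset U hU := (mem_union.1 hU).elim
    (fun h => (h𝒰.subset U h).trans subset_union_left)
    fun h => (h𝒱.subset U h).trans subset_union_right
  pairwiseDisjoint := by
    rw [coe_union, Set.pairwiseDisjoint_union]
    exact ⟨h𝒰.pairwiseDisjoint, h𝒱.pairwiseDisjoint, fun U hU V hV _ =>
      hXY.mono (h𝒰.subset U hU) (h𝒱.subset V hV)⟩
  card_le_two U hU := (mem_union.1 hU).elim (h𝒰.card_le_two U) (h𝒱.card_le_two U)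
  exists_notMem U hU := (mem_union.1 hU).elim (h𝒰.exists_notMem U) (h𝒱.exists_notMem U)

theorem singletons (hX : ∀ i ∈ X, (w i).1 = 0 ∧ (w i).2 ∉ H) :
    IsPacking w H X (X.map ⟨_, singleton_injective⟩) where
  subset := by simp
  pairwiseDisjoint := by
    rw [coe_map]
    rintro _ ⟨i, -, rfl⟩ _ ⟨j, -, rfl⟩ hij
    exact disjoint_singleton.2 (mt (congrArg _) hij)
  card_le_two := by simp
  exists_notMem := by
    simp only [mem_map, Function.Embedding.coeFn_mk, forall_exists_index, and_imp]
    rintro _ i hi rfl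
    exact ⟨(w i).2, (hX i hi).2, by simpa [← (hX i hi).1] using IsSignedSum.singleton w i⟩

end IsPacking

theorem exists_isPacking_pairs [DecidableEq (A ⧸ H)] {F : Finset ι} {k : ℕ}
    (hF : ∀ i ∈ F, (w i).1 = 1) (hk : 2 * k ≤ #F)
    (hclass : ∀ c : A ⧸ H, k ≤ #{i ∈ F | ((w i).2 : A ⧸ H) ≠ c}) :
    ∃ 𝒰, IsPacking w H F 𝒰 ∧ #𝒰 = k := by
  classical
  obtain ⟨𝒰, h𝒰k, h𝒰, hpairs⟩ := exists_pairwiseDisjoint_pairs_ne hk hclass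
  refine ⟨𝒰, ⟨fun U hU => ?_, h𝒰, fun U hU => ?_, fun U hU => ?_⟩, h𝒰k⟩ <;>
    obtain ⟨i, hi, j, hj, hij, rfl⟩ := hpairs U hU
  · exact insert_subset hi (singleton_subset_iff.2 hj)
  · exact card_le_two
  · refine ⟨(w i).2 - (w j).2, fun h => hij (QuotientAddGroup.eq_iff_sub_mem.2 h), ?_⟩
    have hpair : IsSignedSum w {i, j} (w i - w j) := .pair_sub fun h => hij (h ▸ rfl)
    have hfst : (w i - w j).1 = 0 := by simp [hF i hi, hF j hj]
    rwa [← hfst]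

end Packing

section Absorption

variable {ι A : Type*} [AddCommGroup A] {w : ι → ℤ × A} {H : AddSubgroup A} {E Y : Finset ι}

/-- The set of indices `E` absorbs the subgroup `H`: every `(0, g)` with `g ∈ H` is a signed sum of
`w` over `E`, so that a sum which only lies in `H` can be corrected to `0`. -/
def AbsorbsSubgroup (w : ι → ℤ × A) (H : AddSubgroup A) (E : Finset ι) : Prop :=
  ∀ g ∈ H, IsSignedSum w E (0, g)

theorem absorbsSubgroup_bot_empty (w : ι → ℤ × A) : AbsorbsSubgroup w ⊥ ∅ := by
  rintro _ rfl
  exact .empty w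

theorem card_comap_mk' [Finite A] (L : AddSubgroup (A ⧸ H)) :
    Nat.card (L.comap (QuotientAddGroup.mk' H)) = Nat.card H * Nat.card L := by
  have hindex : (L.comap (QuotientAddGroup.mk' H)).index = L.index :=
    L.index_comap_of_surjective (QuotientAddGroup.mk'_surjective H)
  refine Nat.eq_of_mul_eq_mul_right (Nat.pos_of_ne_zero L.index_ne_zero_of_finite) ?_
  calc Nat.card (L.comap (QuotientAddGroup.mk' H)) * L.index
      = Nat.card A := by rw [← hindex, AddSubgroup.card_mul_index]
    _ = Nat.card H * Nat.card (A ⧸ H) := H.card_mul_index.symm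
    _ = Nat.card H * Nat.card L * L.index := by rw [mul_assoc, L.card_mul_index]

theorem AbsorbsSubgroup.comap_mk' [DecidableEq ι] {𝒥 : Finset (Finset ι)} {x : Finset ι → A}
    {L : AddSubgroup (A ⧸ H)} (hE : AbsorbsSubgroup w H E)
    (hx : ∀ U ∈ 𝒥, IsSignedSum w U (0, x U)) (h𝒥 : (𝒥 : Set (Finset ι)).PairwiseDisjoint id)
    (hE𝒥 : ∀ U ∈ 𝒥, Disjoint E U)
    (hL : ∀ g ∈ L, IsSignedSum (fun U => (x U : A ⧸ H)) 𝒥 g) :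
    AbsorbsSubgroup w (L.comap (QuotientAddGroup.mk' H)) (E ∪ 𝒥.biUnion id) := by
  intro g hg
  obtain ⟨z, hz, hzg⟩ :=
    IsSignedSum.exists_of_map (φ := QuotientAddGroup.mk' H) (w := x) (hL _ hg)
  have hz𝒥 : IsSignedSum w (𝒥.biUnion id) (0, z) :=
    (hz.map (AddMonoidHom.inr ℤ A)).biUnion hx h𝒥
  have hgz : g - z ∈ H := QuotientAddGroup.eq_iff_sub_mem.1 hzg.symm
  simpa using (hE _ hgz).add hz𝒥 ((disjoint_biUnion_right _ _ _).2 hE𝒥)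

theorem AbsorbsSubgroup.exists_lt [DecidableEq ι] [Finite A] {𝒰 : Finset (Finset ι)}
    (hodd : Odd (Nat.card A)) (hE : AbsorbsSubgroup w H E) (hcard : #E + 2 ≤ 2 * Nat.card H)
    (h𝒰 : IsPacking w H Y 𝒰) (hEY : Disjoint E Y) (hH : H ≠ ⊤) (hindex : H.index ≤ #𝒰 + 1) :
    ∃ H' > H, ∃ J ⊆ Y, AbsorbsSubgroup w H' (E ∪ J) ∧ #(E ∪ J) + 2 ≤ 2 * Nat.card H' := by
  choose! x hxH hx using h𝒰.exists_notMem
  have hone : 1 < H.index := by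
    have := H.index_ne_zero_of_finite
    have := mt AddSubgroup.index_eq_one.1 hH
    omega
  obtain ⟨L, hL, 𝒥, h𝒥𝒰, h𝒥L, hsum⟩ := exists_forall_isSignedSum_addSubgroup
    (x := fun U => (x U : A ⧸ H)) (I := 𝒰)
    (hodd.of_dvd_nat H.index_dvd_card)
    (fun U hU h => hxH U hU ((QuotientAddGroup.eq_zero_iff _).1 h)) hone hindex
  have hHL := card_comap_mk' L
  have hHpos : 0 < Nat.card H := Nat.card_pos
  have hLpos : 0 < Nat.card L := Nat.card_pos
  refine ⟨L.comap (QuotientAddGroup.mk' H), ?_, 𝒥.biUnion id,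
    biUnion_subset.2 fun U hU => h𝒰.subset U (h𝒥𝒰 hU), ?_, ?_⟩
  · refine lt_of_le_of_ne (QuotientAddGroup.le_comap_mk' H L) fun h => hL ?_
    rw [← h] at hHL
    exact AddSubgroup.card_eq_one.1 (by nlinarith)
  · exact hE.comap_mk' (fun U hU => hx U (h𝒥𝒰 hU)) (h𝒰.pairwiseDisjoint.subset h𝒥𝒰)
      (fun U hU => hEY.mono_right (h𝒰.subset U (h𝒥𝒰 hU))) hsum
  · have hunion : #(𝒥.biUnion id) ≤ #𝒥 * 2 :=
      card_biUnion_le_card_mul _ _ _ fun U hU => h𝒰.card_le_two U (h𝒥𝒰 hU)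
    have := card_union_le E (𝒥.biUnion id)
    have : Nat.card H + Nat.card L ≤ Nat.card H * Nat.card L + 1 := by nlinarith
    omega

/-- A subgroup `H` absorbed by few indices `E` of the reserve `X`, such that the rest of the reserve
contains too few blocks to absorb a larger subgroup. -/
structure IsSaturated (w : ι → ℤ × A) (X : Finset ι) (H : AddSubgroup A) (E : Finset ι) :
    Prop where
  subset : E ⊆ X
  absorbs : AbsorbsSubgroup w H E
  card_add_two_le : #E + 2 ≤ 2 * Nat.card H
  card_add_one_lt : H ≠ ⊤ → ∀ Y ⊆ X, Disjoint E Y → ∀ 𝒰, IsPacking w H Y 𝒰 → #𝒰 + 1 < H.index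

theorem exists_isSaturated [Finite A] (hodd : Odd (Nat.card A)) (w : ι → ℤ × A) (X : Finset ι) :
    ∃ H E, IsSaturated w X H E := by
  classical
  obtain ⟨H, ⟨E, hEX, hE, hcard⟩, hmax⟩ := Set.Finite.exists_maximal
    (s := {H : AddSubgroup A | ∃ E ⊆ X, AbsorbsSubgroup w H E ∧ #E + 2 ≤ 2 * Nat.card H})
    (Set.toFinite _) ⟨⊥, ∅, empty_subset X, absorbsSubgroup_bot_empty w, by simp⟩
  refine ⟨H, E, hEX, hE, hcard, fun hH Y hYX hEY 𝒰 h𝒰 => ?_⟩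
  by_contra! hindex
  obtain ⟨H', hlt, J, hJY, hJ, hJcard⟩ := hE.exists_lt hodd hcard h𝒰 hEY hH hindex
  exact hlt.not_ge
    (hmax ⟨E ∪ J, union_subset hEX (hJY.trans hYX), hJ, hJcard⟩ hlt.le)

end Absorption

section Heights

variable {ι A : Type*} [AddCommGroup A] {w : ι → ℤ × A} {H : AddSubgroup A} {D E J : Finset ι}

theorem IsSignedSum.abs_fst_le_card {z : ℤ × A} (h : IsSignedSum w E z)
    (hw : ∀ i ∈ E, (w i).1 = 0 ∨ (w i).1 = 1) : |z.1| ≤ #E :=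
  (h.map (AddMonoidHom.fst ℤ A)).abs_le_card fun i hi => by
    rcases hw i hi with h | h <;> simp [h]

theorem exists_isSignedSum_fst_eq {z : ℤ} (hD : ∀ i ∈ D, (w i).1 = 1) (hz : |z| ≤ #D)
    (heven : Even (#D - z)) : ∃ y, IsSignedSum w D y ∧ y.1 = z := by
  classical
  obtain ⟨r, hr⟩ := heven
  rw [abs_le] at hz
  obtain ⟨B, hBD, hB⟩ := exists_subset_card_eq (s := D) (n := r.toNat) (by omega)
  have hfst (C : Finset ι) (hC : C ⊆ D) : (∑ i ∈ C, w i).1 = #C := by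
    rw [Prod.fst_sum, sum_congr rfl fun i hi => hD i (hC hi)]
    simp
  refine ⟨_, .of_subset hBD, ?_⟩
  rw [Prod.fst_sub, hfst _ sdiff_subset, hfst _ hBD, cast_card_sdiff hBD]
  omega

/-- The subgroup of all `(k, a)` such that `a` lies in the coset `k • c` of `H`. It contains the
reflections of class `c`, and it meets first coordinate `0` in `H`. -/
def tiltedSubgroup (c : A ⧸ H) : AddSubgroup (ℤ × A) :=
  ((QuotientAddGroup.mk' H).comp (AddMonoidHom.snd ℤ A) -
    (zmultiplesHom (A ⧸ H) c).comp (AddMonoidHom.fst ℤ A)).ker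

theorem mem_tiltedSubgroup {c : A ⧸ H} {z : ℤ × A} :
    z ∈ tiltedSubgroup c ↔ (z.2 : A ⧸ H) = z.1 • c := by
  simp [tiltedSubgroup, AddMonoidHom.mem_ker, sub_eq_zero]

theorem mem_tiltedSubgroup_of_fst_eq_one {c : A ⧸ H} {z : ℤ × A} (hz : z.1 = 1)
    (hc : (z.2 : A ⧸ H) = c) : z ∈ tiltedSubgroup c := by
  rw [mem_tiltedSubgroup, hz, one_smul, hc]

instance finiteIndex_tiltedSubgroup [H.FiniteIndex] (c : A ⧸ H) :
    (tiltedSubgroup c).FiniteIndex := by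
  unfold tiltedSubgroup
  infer_instance

theorem index_tiltedSubgroup_le [H.FiniteIndex] (c : A ⧸ H) :
    (tiltedSubgroup c).index ≤ H.index := by
  rw [tiltedSubgroup, AddSubgroup.index_ker]
  exact AddSubgroup.card_le_card_addGroup _

theorem AbsorbsSubgroup.isSignedSum_zero [DecidableEq ι] (hE : AbsorbsSubgroup w H E)
    (hD : HasSignedSumIn w ((⊥ : AddSubgroup ℤ).prod H) D) (hED : Disjoint E D) :
    IsSignedSum w (E ∪ D) 0 := by
  obtain ⟨⟨k, g⟩, hkg, hD⟩ := hD
  obtain ⟨rfl, hg⟩ : k = 0 ∧ g ∈ H := AddSubgroup.mem_prod.1 hkg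
  have hsum := (hE (-g) (H.neg_mem hg)).add hD hED
  rwa [Prod.mk_add_mk, zero_add, neg_add_cancel, Prod.mk_zero_zero] at hsum

theorem HasSignedSumIn.bot_prod_of_tiltedSubgroup [DecidableEq ι] {c : A ⧸ H} {y : ℤ × A}
    (hJ : IsSignedSum w J y) (hy : y ∈ tiltedSubgroup c) (hJD : Disjoint J D)
    (hDc : ∀ i ∈ D, (w i).1 = 1 ∧ w i ∈ tiltedSubgroup c) (hyD : |y.1| ≤ #D)
    (heven : Even (#D - y.1)) :
    HasSignedSumIn w ((⊥ : AddSubgroup ℤ).prod H) (J ∪ D) := by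
  obtain ⟨z, hz, hzy⟩ := exists_isSignedSum_fst_eq (z := -y.1) (fun i hi => (hDc i hi).1)
    (by rwa [abs_neg]) (by simpa [Int.even_add, Int.even_sub] using heven)
  have hsum : y + z ∈ tiltedSubgroup c := add_mem hy (hz.mem fun i hi => (hDc i hi).2)
  have hfst : (y + z).1 = 0 := by simp [hzy]
  rw [mem_tiltedSubgroup, hfst, zero_smul, QuotientAddGroup.eq_zero_iff] at hsum
  exact ⟨y + z, AddSubgroup.mem_prod.2 ⟨hfst, hsum⟩, hJ.add hz hJD⟩

end Heights

section OneProdBlocks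

variable {ι A : Type*} [AddCommGroup A] {w : ι → ℤ × A} {H : AddSubgroup A} {E J W : Finset ι}

/-- Some nonempty set of indices, of size divisible by `|A|`, codes a sequence of elements of the
generalized dihedral group of `A` that can be ordered to have product `1`. An index `i` stands for
the rotation `(w i).2` if `(w i).1 = 0` and for a reflection if `(w i).1 = 1`; rotations can only be
inverted in the presence of a reflection. -/
def HasOneProdBlock (w : ι → ℤ × A) : Prop :=
  ∃ E : Finset ι, E.Nonempty ∧ Nat.card A ∣ #E ∧
    ((IsSignedSum w E 0 ∧ ∃ i ∈ E, (w i).1 = 1) ∨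
      (∀ i ∈ E, (w i).1 = 0) ∧ ∑ i ∈ E, (w i).2 = 0)

theorem hasOneProdBlock_of_isSignedSum {i : ι} (hE : IsSignedSum w E 0) (hcard : Nat.card A ∣ #E)
    (hi : i ∈ E) (hwi : (w i).1 = 1) : HasOneProdBlock w :=
  ⟨E, ⟨i, hi⟩, hcard, .inl ⟨hE, i, hi, hwi⟩⟩

theorem AbsorbsSubgroup.hasOneProdBlock_of_tiltedSubgroup [DecidableEq ι] {c : A ⧸ H} {y : ℤ × A}
    {N : ℕ} (hE : AbsorbsSubgroup w H E) (hW : ∀ i ∈ W, (w i).1 = 1 ∧ w i ∈ tiltedSubgroup c)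
    (hEW : Disjoint E W) (hJ : IsSignedSum w J y) (hy : y ∈ tiltedSubgroup c)
    (hJEW : Disjoint J (E ∪ W)) (hN : 0 < N) (hNW : N ≤ #W) (hyN : |y.1| ≤ N)
    (heven : Even (N - y.1)) (hcard : Nat.card A ∣ #E + #J + N) : HasOneProdBlock w := by
  obtain ⟨D, hDW, rfl⟩ := exists_subset_card_eq hNW
  rw [disjoint_union_right] at hJEW
  have hJD : Disjoint J D := hJEW.2.mono_right hDW
  have hEJD : Disjoint E (J ∪ D) := disjoint_union_right.2 ⟨hJEW.1.symm, hEW.mono_right hDW⟩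
  obtain ⟨i, hi⟩ := card_pos.1 hN
  refine hasOneProdBlock_of_isSignedSum (i := i) (hE.isSignedSum_zero
    (.bot_prod_of_tiltedSubgroup hJ hy hJD (fun i hi => hW i (hDW hi)) hyN heven) hEJD) ?_
    (mem_union_right _ (mem_union_right _ hi)) (hW i (hDW hi)).1
  rwa [card_union_of_disjoint hEJD, card_union_of_disjoint hJD, ← add_assoc]

end OneProdBlocks

section Majority

variable {ι A : Type*} [AddCommGroup A] {w : ι → ℤ × A} {H : AddSubgroup A} {E W : Finset ι}
  {c : A ⧸ H} {k : ℕ}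

theorem AbsorbsSubgroup.hasOneProdBlock_of_odd_card_sub [DecidableEq ι] {J : Finset ι}
    {y : ℤ × A} (hE : AbsorbsSubgroup w H E) (hodd : Odd (Nat.card A))
    (hw : ∀ i, (w i).1 = 0 ∨ (w i).1 = 1)
    (hW : ∀ i ∈ W, (w i).1 = 1 ∧ w i ∈ tiltedSubgroup c) (hEW : Disjoint E W)
    (hk : 1 ≤ k) (hEk : #E + 2 * k + 1 ≤ Nat.card A) (hcardW : Nat.card A ≤ #W)
    (hEeven : Even #E) (hJEW : Disjoint J (E ∪ W)) (hJk : #J ≤ k + 1) (hJ : IsSignedSum w J y)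
    (hy : y ∈ tiltedSubgroup c) (hyJ : ¬ Even (#J - y.1)) : HasOneProdBlock w := by
  have habs := abs_le.1 (hJ.abs_fst_le_card fun i _ => hw i)
  refine hE.hasOneProdBlock_of_tiltedSubgroup (N := Nat.card A - #E - #J) hW hEW hJ hy hJEW
    (by omega) (by omega) ?_ ?_
    (by rw [show #E + #J + (Nat.card A - #E - #J) = Nat.card A by omega])
  · rw [abs_le]
    grind
  · grind

theorem AbsorbsSubgroup.hasOneProdBlock_of_forall_even_card_sub [DecidableEq ι] [Fintype ι]
    [H.FiniteIndex] (hE : AbsorbsSubgroup w H E) (hw : ∀ i, (w i).1 = 0 ∨ (w i).1 = 1)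
    (hW : ∀ i ∈ W, (w i).1 = 1 ∧ w i ∈ tiltedSubgroup c) (hEW : Disjoint E W)
    (hH : H.index < 2 ^ (k + 1)) (hι : 2 * Nat.card A + k ≤ Fintype.card ι)
    (hEY : #E + 2 * #(E ∪ W)ᶜ < 2 * Nat.card A) (hEeven : Even #E)
    (heven : ∀ J y, Disjoint J (E ∪ W) → #J ≤ k + 1 → IsSignedSum w J y →
      y ∈ tiltedSubgroup c → Even (#J - y.1)) : HasOneProdBlock w := by
  obtain ⟨J, hJY, ⟨y, hy, hJ, hyJ⟩, hYJ, -⟩ := exists_subset_le_card_lt (s := (E ∪ W)ᶜ)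
    (P := fun J => ∃ y ∈ tiltedSubgroup c, IsSignedSum w J y ∧ Even (#J - y.1))
    (#(E ∪ W)ᶜ - k) k.succ_pos ⟨0, zero_mem _, .empty w, by simp⟩ (by
      rintro J hJY ⟨y, hy, hJ, hyJ⟩ hlt
      obtain ⟨B, hBY, hB⟩ := exists_subset_card_eq (s := (E ∪ W)ᶜ \ J) (n := k + 1)
        (by rw [card_sdiff_of_subset hJY]; omega)
      obtain ⟨C, hCB, hC, z, hz, hCz⟩ :=
        exists_hasSignedSumIn_of_index_lt_two_pow w (K := tiltedSubgroup c) (Y := B)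
          (by rw [hB]; exact (index_tiltedSubgroup_le c).trans_lt hH)
      have hJC : Disjoint J C := disjoint_sdiff.mono_right (hCB.trans hBY)
      have hCk : #C ≤ k + 1 := hB ▸ card_le_card hCB
      have hCY : Disjoint C (E ∪ W) :=
        disjoint_compl_left.mono_left ((hCB.trans hBY).trans sdiff_subset)
      refine ⟨C, hCB.trans hBY, hC, hCk, y + z, add_mem hy hz, hJ.add hCz hJC, ?_⟩
      have hzC := heven C z hCY hCk hCz hz
      rw [card_union_of_disjoint hJC, Prod.fst_add, Nat.cast_add, add_sub_add_comm]
      exact hyJ.add hzC)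
  have habs := hJ.abs_fst_le_card fun i _ => hw i
  have hcardJ := card_le_card hJY
  have hcardι := card_add_card_compl (E ∪ W)
  rw [card_union_of_disjoint hEW] at hcardι
  refine hE.hasOneProdBlock_of_tiltedSubgroup (N := 2 * Nat.card A - #E - #J) hW hEW hJ hy
    (disjoint_compl_left.mono_left hJY) (by omega) (by omega) (by omega) ?_ ⟨2, by omega⟩
  rw [abs_le] at habs
  grind

theorem AbsorbsSubgroup.hasOneProdBlock_of_majority [DecidableEq ι] [Fintype ι] [H.FiniteIndex]
    (hE : AbsorbsSubgroup w H E) (hodd : Odd (Nat.card A))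
    (hw : ∀ i, (w i).1 = 0 ∨ (w i).1 = 1)
    (hW : ∀ i ∈ W, (w i).1 = 1 ∧ w i ∈ tiltedSubgroup c) (hEW : Disjoint E W)
    (hH : H.index < 2 ^ (k + 1)) (hk : 1 ≤ k) (hEk : #E + 2 * k + 1 ≤ Nat.card A)
    (hcardW : Nat.card A ≤ #W) (hι : 2 * Nat.card A + k ≤ Fintype.card ι)
    (hEY : #E + 2 * #(E ∪ W)ᶜ < 2 * Nat.card A) : HasOneProdBlock w := by
  rcases (#E).even_or_odd with hEeven | hEodd
  · by_cases h : ∃ J y, Disjoint J (E ∪ W) ∧ #J ≤ k + 1 ∧ IsSignedSum w J y ∧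
      y ∈ tiltedSubgroup c ∧ ¬ Even (#J - y.1)
    · obtain ⟨J, y, hJEW, hJk, hJ, hy, hyJ⟩ := h
      exact hE.hasOneProdBlock_of_odd_card_sub hodd hw hW hEW hk hEk hcardW hEeven hJEW hJk hJ hy
        hyJ
    · push Not at h
      exact hE.hasOneProdBlock_of_forall_even_card_sub hw hW hEW hH hι hEY hEeven h
  · refine hE.hasOneProdBlock_of_tiltedSubgroup (N := Nat.card A - #E) hW hEW (.empty w)
      (zero_mem _) (disjoint_empty_left _) (by omega) (by omega) (by simp) ?_
      (by rw [card_empty, add_zero, Nat.add_sub_cancel' (by omega)])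
    simpa using (Nat.Odd.sub_odd hodd hEodd)

end Majority

theorem exists_card_eq_natCard_sum_eq_zero {ι A : Type*} [AddCommGroup A] [Finite A]
    {H : AddSubgroup A} [hcyc : IsAddCyclic H] {a : ι → A} {B : Finset ι} (ha : ∀ i ∈ B, a i ∈ H)
    (hB : Nat.card A + Nat.card H ≤ #B + 1) : ∃ D ⊆ B, #D = Nat.card A ∧ ∑ i ∈ D, a i = 0 := by
  classical
  let φ : H ≃+ ZMod (Nat.card H) := (zmodAddCyclicAddEquiv hcyc).symm
  obtain ⟨q, hq⟩ := H.card_addSubgroup_dvd_card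
  have hpos : 0 < Nat.card H := Nat.card_pos
  obtain ⟨D, hDB, ⟨⟨r, hr⟩, hD⟩, hle, hlt⟩ := exists_subset_le_card_lt (s := B)
    (P := fun D => Nat.card H ∣ #D ∧ ∑ i ∈ D, a i = 0) (Nat.card A) hpos (by simp) (by
      rintro D hDB ⟨⟨r, hr⟩, hD⟩ hlt
      have hle : #D + Nat.card H ≤ Nat.card A := by
        rw [hr, hq] at hlt ⊢
        rw [← mul_add_one]
        exact Nat.mul_le_mul_left _ (lt_of_mul_lt_mul_left hlt (Nat.zero_le _))
      obtain ⟨C, hC, hCcard, hCsum⟩ := ZMod.erdos_ginzburg_ziv (s := B \ D)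
        (fun i => if hi : i ∈ B then φ ⟨a i, ha i hi⟩ else 0)
        (by rw [card_sdiff_of_subset hDB]; omega)
      have hCB : C ⊆ B := hC.trans sdiff_subset
      have hCa : ∑ i ∈ C, a i = 0 := by
        have hsum : φ (∑ i ∈ C.attach, ⟨a i, ha i (hCB i.2)⟩) = 0 := by
          rw [← hCsum, ← sum_attach C, map_sum]
          exact sum_congr rfl fun i _ => by rw [dif_pos (hCB i.2)]
        rw [EmbeddingLike.map_eq_zero_iff] at hsum
        rw [← sum_attach]
        simpa using congrArg (Subtype.val) hsum
      have hDC : Disjoint D C := disjoint_sdiff.mono_right hC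
      refine ⟨C, hC, card_pos.1 (by omega), hCcard.le, ?_, ?_⟩
      · rw [card_union_of_disjoint hDC, hr, hCcard, ← mul_add_one]
        exact dvd_mul_right _ _
      · rw [sum_union hDC, hD, hCa, add_zero])
  refine ⟨D, hDB, ?_, hD⟩
  rw [hr, hq] at hle hlt ⊢
  rw [← mul_add_one] at hlt
  exact congrArg _ ((Nat.lt_succ_iff.1 (lt_of_mul_lt_mul_left hlt (Nat.zero_le _))).antisymm
    (le_of_mul_le_mul_left hle hpos))

section Completion

variable {ι A : Type*} [AddCommGroup A] {w : ι → ℤ × A} {H : AddSubgroup A} {D E F R : Finset ι}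

theorem hasOneProdBlock_of_rotations [Finite A] [IsAddCyclic H]
    (hR : ∀ i ∈ R, (w i).1 = 0 ∧ (w i).2 ∈ H) (hcard : Nat.card A + Nat.card H ≤ #R + 1) :
    HasOneProdBlock w := by
  obtain ⟨D, hDR, hD, hsum⟩ := exists_card_eq_natCard_sum_eq_zero (fun i hi => (hR i hi).2) hcard
  exact ⟨D, card_pos.1 (hD ▸ Nat.card_pos), hD ▸ dvd_rfl,
    .inr ⟨fun i hi => (hR i (hDR hi)).1, hsum⟩⟩

theorem AbsorbsSubgroup.hasOneProdBlock_of_hasSignedSumIn [DecidableEq ι] {T : ℕ}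
    (hE : AbsorbsSubgroup w H E) (hD : HasSignedSumIn w ((⊥ : AddSubgroup ℤ).prod H) D)
    (hED : Disjoint E D) (hR : ∀ i ∈ R, (w i).1 = 0 ∧ (w i).2 ∈ H) (hRED : Disjoint R (E ∪ D))
    (href : ∃ i ∈ E ∪ D, (w i).1 = 1) (hT : Nat.card A ∣ T) (hle : #E + #D ≤ T)
    (hge : T ≤ #E + #D + #R) : HasOneProdBlock w := by
  obtain ⟨i, hi, hwi⟩ := href
  obtain ⟨S, hSR, hS⟩ := exists_subset_card_eq (s := R) (n := T - #E - #D) (by omega)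
  have hSsum : HasSignedSumIn w ((⊥ : AddSubgroup ℤ).prod H) S :=
    .of_forall_mem fun i hi => AddSubgroup.mem_prod.2 (hR i (hSR hi))
  have hSED := disjoint_union_right.1 (hRED.mono_left hSR)
  have hEDS : Disjoint E (D ∪ S) := disjoint_union_right.2 ⟨hED, hSED.1.symm⟩
  refine hasOneProdBlock_of_isSignedSum
    (hE.isSignedSum_zero (hD.union hSsum hSED.2.symm) hEDS) ?_ (i := i) ?_ hwi
  · rwa [card_union_of_disjoint hEDS, card_union_of_disjoint hSED.2.symm, hS,
      show #E + (#D + (T - #E - #D)) = T by omega]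
  · rw [← union_assoc]
    exact mem_union_left _ hi

theorem AbsorbsSubgroup.hasOneProdBlock_of_card_image_le [DecidableEq (A ⧸ H)] {s T : ℕ}
    (hE : AbsorbsSubgroup w H E) (hF : ∀ i ∈ F, (w i).1 = 1) (hEF : Disjoint E F)
    (hs : #(F.image fun i => ((w i).2 : A ⧸ H)) ≤ s)
    (hR : ∀ i ∈ R, (w i).1 = 0 ∧ (w i).2 ∈ H) (hRE : Disjoint R E)
    (href : (∃ i ∈ E, (w i).1 = 1) ∨ s + 1 ≤ #F)
    (hpar : R.Nonempty ∨ Even (T - #E)) (hT : Nat.card A ∣ T) (hET : #E + 2 ≤ T)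
    (hTs : T + s ≤ #E + #F + #R) : HasOneProdBlock w := by
  classical
  have himage := card_image_le (s := F) (f := fun i => ((w i).2 : A ⧸ H))
  have hpar' : 1 ≤ #R ∨ (T - #E) % 2 = 0 := hpar.imp card_pos.2 Nat.even_iff.1
  obtain ⟨D, hDF, hDcard, hD⟩ := exists_card_eq_two_mul_hasSignedSumIn
    (f := fun i => ((w i).2 : A ⧸ H)) (w := w) (K := (⊥ : AddSubgroup ℤ).prod H) (F := F)
    (p := min ((#F + 1 - #(F.image fun i => ((w i).2 : A ⧸ H))) / 2) ((T - #E) / 2))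
    (fun i hi j hj hij => AddSubgroup.mem_prod.2
      ⟨by simp [hF i hi, hF j hj], QuotientAddGroup.eq_iff_sub_mem.1 hij⟩) (by omega)
  have hRF : Disjoint R F := disjoint_left.2 fun i hiR hiF => by
    simpa [hF i hiF] using (hR i hiR).1
  refine hE.hasOneProdBlock_of_hasSignedSumIn hD (hEF.mono_right hDF) hR
    (disjoint_union_right.2 ⟨hRE, hRF.mono_right hDF⟩) ?_ hT (by omega) (by omega)
  rcases href with ⟨i, hi, hwi⟩ | href
  · exact ⟨i, mem_union_left _ hi, hwi⟩
  · obtain ⟨i, hi⟩ := card_pos.1 (show 0 < #D by omega)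
    exact ⟨i, mem_union_right _ hi, hF i (hDF hi)⟩

theorem exists_hasSignedSumIn_le_card_lt [H.FiniteIndex] {k : ℕ} (q : ℕ)
    (hF : ∀ i ∈ F, (w i).1 = 1) (hk : 0 < k) (hH : H.index < 2 ^ k) (hq : q + 2 * k ≤ #F + 1) :
    ∃ D ⊆ F, HasSignedSumIn w ((⊥ : AddSubgroup ℤ).prod H) D ∧ q ≤ #D ∧ #D < q + 2 * k := by
  classical
  refine exists_subset_le_card_lt q (by omega) (.empty w _) fun D hDF hD hDq => ?_
  obtain ⟨J, hJ, hJ0, hJk, hJH⟩ := exists_hasSignedSumIn_bot_prod (Y := F \ D)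
    (fun i hi => hF i (sdiff_subset hi)) (by rw [card_sdiff_of_subset hDF]; omega) hH
  exact ⟨J, hJ, hJ0, hJk, hD.union hJH (disjoint_sdiff.mono_right hJ)⟩

theorem AbsorbsSubgroup.hasOneProdBlock_of_index_lt_two_pow [H.FiniteIndex] {k T : ℕ}
    (hE : AbsorbsSubgroup w H E) (hF : ∀ i ∈ F, (w i).1 = 1) (hEF : Disjoint E F)
    (hR : ∀ i ∈ R, (w i).1 = 0 ∧ (w i).2 ∈ H) (hRE : Disjoint R E) (hk : 0 < k)
    (hH : H.index < 2 ^ k) (hT : Nat.card A ∣ T) (hlt : #E + #R < T) (hkR : 2 * k ≤ #R + 1)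
    (hge : T + 2 * k ≤ #E + #F + #R + 1) : HasOneProdBlock w := by
  classical
  obtain ⟨D, hDF, hD, hDge, hDlt⟩ :=
    exists_hasSignedSumIn_le_card_lt (T - #E - #R) hF hk hH (by omega)
  obtain ⟨i, hi⟩ := card_pos.1 (show 0 < #D by omega)
  have hRD : Disjoint R D := disjoint_left.2 fun i hiR hiD => by
    simpa [hF i (hDF hiD)] using (hR i hiR).1
  exact hE.hasOneProdBlock_of_hasSignedSumIn hD (hEF.mono_right hDF) hR
    (disjoint_union_right.2 ⟨hRE, hRD⟩) ⟨i, mem_union_right _ hi, hF i (hDF hi)⟩ hT (by omega)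
    (by omega)

end Completion

section Types

variable {ι A : Type*} [Fintype ι] {w : ι → ℤ × A} {E : Finset ι} {i : ι}

open Classical in
/-- The indices outside `E` that code reflections. -/
noncomputable def reflections (w : ι → ℤ × A) (E : Finset ι) : Finset ι :=
  {i | i ∉ E ∧ (w i).1 = 1}

theorem mem_reflections : i ∈ reflections w E ↔ i ∉ E ∧ (w i).1 = 1 := by
  simp [reflections]

theorem disjoint_reflections : Disjoint E (reflections w E) :=
  disjoint_right.2 fun _ hi => (mem_reflections.1 hi).1

variable [AddCommGroup A] {H : AddSubgroup A}

open Classical in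
/-- The indices outside `E` that code rotations belonging to `H`. -/
noncomputable def innerRotations (w : ι → ℤ × A) (H : AddSubgroup A) (E : Finset ι) : Finset ι :=
  {i | i ∉ E ∧ (w i).1 = 0 ∧ (w i).2 ∈ H}

open Classical in
/-- The indices outside `E` that code rotations not belonging to `H`. -/
noncomputable def outerRotations (w : ι → ℤ × A) (H : AddSubgroup A) (E : Finset ι) : Finset ι :=
  {i | i ∉ E ∧ (w i).1 = 0 ∧ (w i).2 ∉ H}

theorem mem_innerRotations : i ∈ innerRotations w H E ↔ i ∉ E ∧ (w i).1 = 0 ∧ (w i).2 ∈ H := by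
  simp [innerRotations]

theorem disjoint_innerRotations : Disjoint (innerRotations w H E) E :=
  disjoint_left.2 fun _ hi => (mem_innerRotations.1 hi).1

theorem mem_outerRotations : i ∈ outerRotations w H E ↔ i ∉ E ∧ (w i).1 = 0 ∧ (w i).2 ∉ H := by
  simp [outerRotations]

theorem card_add_reflections_add_rotations (hw : ∀ i, (w i).1 = 0 ∨ (w i).1 = 1) :
    #E + #(reflections w E) + #(innerRotations w H E) + #(outerRotations w H E) =
      Fintype.card ι := by
  classical
  have hrot : #(innerRotations w H E) + #(outerRotations w H E) = #{i ∈ Eᶜ | (w i).1 = 0} := by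
    rw [← card_filter_add_card_filter_not (s := {i ∈ Eᶜ | (w i).1 = 0}) fun i => (w i).2 ∈ H]
    congr 2 <;> ext i <;> simp [mem_innerRotations, mem_outerRotations, and_assoc]
  have hcompl : #(reflections w E) + #{i ∈ Eᶜ | (w i).1 = 0} = #Eᶜ := by
    rw [← card_filter_add_card_filter_not (s := Eᶜ) fun i => (w i).1 = 1]
    congr 2 <;> ext i
    · simp [mem_reflections]
    · rcases hw i with h | h <;> simp [h]
  rw [add_assoc, hrot, add_assoc, hcompl, card_add_card_compl]

end Types

theorem two_mul_log_add_one_le {m : ℕ} (hm : 3 ≤ m) (hodd : Odd m) : 2 * Nat.log 2 m + 1 ≤ m := by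
  have hpow : 2 ^ Nat.log 2 m ≤ m := Nat.pow_log_le_self 2 (by omega)
  have hlin (k : ℕ) : 2 * (k + 3) + 1 ≤ 2 ^ (k + 3) := by
    induction k with
    | zero => norm_num
    | succ k ih => rw [show k + 1 + 3 = k + 3 + 1 from rfl, pow_succ]; omega
  obtain ⟨r, rfl⟩ := hodd
  rcases lt_or_ge (Nat.log 2 (2 * r + 1)) 3 with h | h
  · interval_cases Nat.log 2 (2 * r + 1) <;> omega
  · obtain ⟨k, hk⟩ := Nat.exists_eq_add_of_le' h
    rw [hk] at hpow ⊢
    exact (hlin k).trans hpow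

/-- A reserve is a set containing all indices except possibly one rotation, which is left out
whenever rotations exist; the index left out serves to correct the parity of a cardinality. -/
structure IsReserve {ι A : Type*} [Fintype ι] [DecidableEq ι] (w : ι → ℤ × A) (X : Finset ι) :
    Prop where
  card_compl_le_one : #Xᶜ ≤ 1
  fst_eq_zero : ∀ i ∉ X, (w i).1 = 0
  exists_notMem : ∀ i, (w i).1 = 0 → ∃ j, j ∉ X

theorem exists_isReserve {ι A : Type*} [Fintype ι] [DecidableEq ι] (w : ι → ℤ × A) :
    ∃ X, IsReserve w X := by
  by_cases h : ∃ i, (w i).1 = 0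
  · obtain ⟨i, hi⟩ := h
    exact ⟨{i}ᶜ, by simp, by simp [hi], fun _ _ => ⟨i, by simp⟩⟩
  · push Not at h
    exact ⟨univ, by simp, by simp, fun i hi => (h i hi).elim⟩

section Saturated

variable {ι A : Type*} [Fintype ι] [DecidableEq ι] [AddCommGroup A] {w : ι → ℤ × A}
  {H : AddSubgroup A} {X E : Finset ι}

namespace IsSaturated

theorem card_outerRotations_add_card_lt (hE : IsSaturated w X H E) (hX : IsReserve w X)
    (hH : H ≠ ⊤) {𝒰 : Finset (Finset ι)} (h𝒰 : IsPacking w H (reflections w E) 𝒰) :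
    #(outerRotations w H E) + #𝒰 < H.index := by
  have hR : IsPacking w H (outerRotations w H E ∩ X) _ :=
    .singletons fun i hi => (mem_outerRotations.1 (mem_inter.1 hi).1).2
  have hdisj : Disjoint (outerRotations w H E ∩ X) (reflections w E) :=
    disjoint_left.2 fun i hi hi' => by
      simpa [(mem_reflections.1 hi').2] using (mem_outerRotations.1 (mem_inter.1 hi).1).2.1
  have hsubset : outerRotations w H E ∩ X ∪ reflections w E ⊆ X :=
    union_subset inter_subset_right fun i hi => by
      by_contra hiX
      simpa [(mem_reflections.1 hi).2] using hX.fst_eq_zero i hiX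
  have hEdisj : Disjoint E (outerRotations w H E ∩ X ∪ reflections w E) :=
    disjoint_union_right.2 ⟨disjoint_right.2 fun i hi =>
      (mem_outerRotations.1 (mem_inter.1 hi).1).1, disjoint_reflections⟩
  have hcard := hE.card_add_one_lt hH _ hsubset hEdisj _ (hR.union h𝒰 hdisj)
  rw [card_union_of_disjoint (hR.disjoint h𝒰 hdisj), card_map] at hcard
  have hsdiff : #(outerRotations w H E \ X) ≤ 1 :=
    (card_le_card fun i hi => mem_compl.2 (mem_sdiff.1 hi).2).trans hX.card_compl_le_one
  have := card_inter_add_card_sdiff (outerRotations w H E) X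
  omega

theorem card_outerRotations_lt (hE : IsSaturated w X H E) (hX : IsReserve w X) (hH : H ≠ ⊤) :
    #(outerRotations w H E) < H.index := by
  simpa using hE.card_outerRotations_add_card_lt hX hH .empty

theorem exists_class (hE : IsSaturated w X H E) (hX : IsReserve w X) (hH : H ≠ ⊤)
    (h : 2 * (H.index - #(outerRotations w H E)) ≤ #(reflections w E)) :
    ∃ c : A ⧸ H, ∃ W ⊆ reflections w E, (∀ i ∈ W, ((w i).2 : A ⧸ H) = c) ∧
      #(reflections w E) + #(outerRotations w H E) < #W + H.index := by
  classical
  have hU := hE.card_outerRotations_lt hX hH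
  by_contra! hclass
  have hpair (c : A ⧸ H) : H.index - #(outerRotations w H E) ≤
      #{i ∈ reflections w E | ((w i).2 : A ⧸ H) ≠ c} := by
    have hc := hclass c {i ∈ reflections w E | ((w i).2 : A ⧸ H) = c} (filter_subset _ _)
      fun i hi => (mem_filter.1 hi).2
    have hsplit : #{i ∈ reflections w E | ((w i).2 : A ⧸ H) = c} +
        #{i ∈ reflections w E | ((w i).2 : A ⧸ H) ≠ c} = #(reflections w E) :=
      card_filter_add_card_filter_not _
    omega
  obtain ⟨𝒰, h𝒰, h𝒰card⟩ := exists_isPacking_pairs (fun i hi => (mem_reflections.1 hi).2) h hpair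
  have hcard := hE.card_outerRotations_add_card_lt hX hH h𝒰
  omega

end IsSaturated

end Saturated

section Endgame

variable {ι A : Type*} [AddCommGroup A] {w : ι → ℤ × A} {H : AddSubgroup A} {X E : Finset ι}

theorem AbsorbsSubgroup.even_card (hE : AbsorbsSubgroup w H E) (h : ∀ i ∈ E, (w i).1 = 1) :
    Even #E := by
  simpa using ((hE 0 H.zero_mem).map (AddMonoidHom.fst ℤ A)).even_card_sub h

variable [Fintype ι] [DecidableEq ι]

theorem IsReserve.rotations_nonempty {i : ι} (hX : IsReserve w X) (hEX : E ⊆ X)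
    (hi : (w i).1 = 0) : (innerRotations w H E ∪ outerRotations w H E).Nonempty := by
  obtain ⟨j, hj⟩ := hX.exists_notMem i hi
  refine ⟨j, ?_⟩
  by_cases hjH : (w j).2 ∈ H <;>
    simp [mem_innerRotations, mem_outerRotations, hX.fst_eq_zero j hj, mt (@hEX j) hj, hjH]

namespace IsSaturated

variable [Finite A]

theorem hasOneProdBlock_of_top [IsAddCyclic A] (hE : IsSaturated w X ⊤ E) (hX : IsReserve w X)
    (hw : ∀ i, (w i).1 = 0 ∨ (w i).1 = 1) (hι : 2 * Nat.card A + 1 ≤ Fintype.card ι) :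
    HasOneProdBlock w := by
  classical
  have hcard := hE.card_add_two_le
  have hEtop := hE.absorbs
  have := QuotientAddGroup.subsingleton_quotient_top (G := A)
  rw [AddSubgroup.card_top] at hcard
  have houter : outerRotations w ⊤ E = ∅ := by simp [Finset.ext_iff, mem_outerRotations]
  have hsum := card_add_reflections_add_rotations (E := E) (H := ⊤) hw
  rw [houter, card_empty] at hsum
  by_cases href : (∃ i ∈ E, (w i).1 = 1) ∨ 1 + 1 ≤ #(reflections w E)
  · refine hEtop.hasOneProdBlock_of_card_image_le (s := 1) (F := reflections w E)
      (fun i hi => (mem_reflections.1 hi).2) disjoint_reflections (card_le_one_of_subsingleton _)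
      (fun i hi => (mem_innerRotations.1 hi).2) disjoint_innerRotations href ?_
      (Nat.dvd_mul_left _ 2) hcard (by omega)
    by_cases hrot : ∃ i, (w i).1 = 0
    · obtain ⟨i, hi⟩ := hrot
      simpa [houter] using Or.inl (hX.rotations_nonempty (H := ⊤) hE.subset hi)
    · push Not at hrot
      have heven := hEtop.even_card fun i _ => (hw i).resolve_left (hrot i)
      exact .inr ((Nat.even_sub (by omega)).2 (by simpa using heven))
  · push Not at href
    refine hasOneProdBlock_of_rotations (H := ⊤) (R := (reflections w E)ᶜ) (fun i hi => ?_) ?_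
    · simp only [mem_compl, mem_reflections, not_and] at hi
      by_cases hiE : i ∈ E
      · exact ⟨(hw i).resolve_right (href.1 i hiE), trivial⟩
      · exact ⟨(hw i).resolve_right (hi hiE), trivial⟩
    · have := card_add_card_compl (reflections w E)
      rw [AddSubgroup.card_top]
      omega

theorem hasOneProdBlock_of_innerRotations_eq_empty (hE : IsSaturated w X H E)
    (hX : IsReserve w X) (hodd : Odd (Nat.card A)) (hw : ∀ i, (w i).1 = 0 ∨ (w i).1 = 1)
    (hH : H ≠ ⊤) (hm : 3 ≤ H.index) (hR : innerRotations w H E = ∅)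
    (hι : 2 * Nat.card A + Nat.log 2 (Nat.card A) ≤ Fintype.card ι) : HasOneProdBlock w := by
  have hcard := hE.card_add_two_le
  have hU := hE.card_outerRotations_lt hX hH
  have hsum := card_add_reflections_add_rotations (E := E) (H := H) hw
  rw [hR, card_empty] at hsum
  have hlog : 2 * Nat.log 2 H.index + 1 ≤ H.index :=
    two_mul_log_add_one_le hm (hodd.of_dvd_nat H.index_dvd_card)
  have hlogA : Nat.log 2 H.index ≤ Nat.log 2 (Nat.card A) :=
    Nat.log_mono_right (Nat.le_of_dvd Nat.card_pos H.index_dvd_card)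
  have hmul := H.card_mul_index
  have hone := mul_add_mul_le_mul_add_mul (show 1 ≤ Nat.card H from Nat.card_pos)
    (show 1 ≤ H.index by omega)
  have htwo := mul_add_mul_le_mul_add_mul (show 1 ≤ Nat.card H from Nat.card_pos)
    (show 2 ≤ H.index by omega)
  obtain ⟨c, W, hWsub, hWc, hWcard⟩ := hE.exists_class hX hH (by omega)
  have hEW : Disjoint E W := disjoint_reflections.mono_right hWsub
  have hcompl := card_add_card_compl (E ∪ W)
  rw [card_union_of_disjoint hEW] at hcompl
  refine hE.absorbs.hasOneProdBlock_of_majority (W := W) (c := c) (k := Nat.log 2 H.index) hodd hw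
    (fun i hi => ?_) hEW (Nat.lt_pow_succ_log_self one_lt_two _) (Nat.log_pos one_lt_two (by omega))
    (by omega) (by omega) (by omega) (by omega)
  have hi1 := (mem_reflections.1 (hWsub hi)).2
  exact ⟨hi1, mem_tiltedSubgroup_of_fst_eq_one hi1 (hWc i hi)⟩

theorem hasOneProdBlock_of_three_le_card [IsAddCyclic A] (hE : IsSaturated w X H E)
    (hX : IsReserve w X) (hw : ∀ i, (w i).1 = 0 ∨ (w i).1 = 1) (hH : H ≠ ⊤) (hm : 3 ≤ H.index)
    (hh : 3 ≤ Nat.card H) (hR : (innerRotations w H E).Nonempty)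
    (hι : 2 * Nat.card A + Nat.log 2 (Nat.card A) ≤ Fintype.card ι) : HasOneProdBlock w := by
  classical
  have hcard := hE.card_add_two_le
  have hU := hE.card_outerRotations_lt hX hH
  have hsum := card_add_reflections_add_rotations (E := E) (H := H) hw
  have hmul := H.card_mul_index
  have hthree := mul_add_mul_le_mul_add_mul (show 2 ≤ Nat.card H by omega) hm
  by_cases href : (∃ i ∈ E, (w i).1 = 1) ∨ H.index + 1 ≤ #(reflections w E)
  · exact hE.absorbs.hasOneProdBlock_of_card_image_le (s := H.index) (F := reflections w E)
      (fun i hi => (mem_reflections.1 hi).2) disjoint_reflections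
      ((Set.ncard_coe_finset _).ge.trans (Set.ncard_le_card _))
      (fun i hi => (mem_innerRotations.1 hi).2) disjoint_innerRotations href (.inl hR) dvd_rfl
      (by nlinarith) (by nlinarith)
  · push Not at href
    have hlog : 2 ≤ Nat.log 2 (Nat.card A) := Nat.le_log_of_pow_le one_lt_two (by nlinarith)
    exact hasOneProdBlock_of_rotations (H := H) (R := innerRotations w H E)
      (fun i hi => (mem_innerRotations.1 hi).2) (by omega)

theorem hasOneProdBlock_of_bot (hE : IsSaturated w X ⊥ E) (hX : IsReserve w X)
    (hw : ∀ i, (w i).1 = 0 ∨ (w i).1 = 1) (hH : (⊥ : AddSubgroup A) ≠ ⊤)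
    (hR : (innerRotations w ⊥ E).Nonempty)
    (hι : 2 * Nat.card A + Nat.log 2 (Nat.card A) ≤ Fintype.card ι) : HasOneProdBlock w := by
  classical
  have hcard := hE.card_add_two_le
  have hbot := hE.absorbs
  have hU := hE.card_outerRotations_lt hX hH
  have hsum := card_add_reflections_add_rotations (E := E) (H := ⊥) hw
  have hRpos := hR.card_pos
  have hrefl : ∀ i ∈ reflections w E, (w i).1 = 1 := fun i hi => (mem_reflections.1 hi).2
  have hrot : ∀ i ∈ innerRotations w ⊥ E, (w i).1 = 0 ∧ (w i).2 ∈ (⊥ : AddSubgroup A) :=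
    fun i hi => (mem_innerRotations.1 hi).2
  rw [AddSubgroup.card_bot] at hcard
  rw [AddSubgroup.index_bot] at hU
  rcases le_or_gt (Nat.card A) #(innerRotations w ⊥ E) with hRn | hRn
  · exact hasOneProdBlock_of_rotations hrot
      (by rwa [AddSubgroup.card_bot, Nat.add_le_add_iff_right])
  rcases le_or_gt (2 * (Nat.card A - #(outerRotations w ⊥ E))) #(reflections w E) with hF | hF
  · obtain ⟨c, W, hWsub, hWc, hWcard⟩ := hE.exists_class hX hH (by rwa [AddSubgroup.index_bot])
    rw [AddSubgroup.index_bot] at hWcard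
    exact hbot.hasOneProdBlock_of_card_image_le (s := 1) (fun i hi => hrefl i (hWsub hi))
      (disjoint_reflections.mono_right hWsub)
      (card_le_card (t := {c}) (by simpa [subset_iff] using hWc)) hrot disjoint_innerRotations
      (.inr (by omega)) (.inl hR) dvd_rfl (by omega) (by omega)
  rcases le_or_gt #(outerRotations w ⊥ E) (Nat.log 2 (Nat.card A)) with hUk | hUk
  · exact hbot.hasOneProdBlock_of_card_image_le (s := (⊥ : AddSubgroup A).index) hrefl
      disjoint_reflections ((Set.ncard_coe_finset _).ge.trans (Set.ncard_le_card _)) hrot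
      disjoint_innerRotations (.inr (by rw [AddSubgroup.index_bot]; omega)) (.inl hR) dvd_rfl
      (by omega) (by rw [AddSubgroup.index_bot]; omega)
  · exact hbot.hasOneProdBlock_of_index_lt_two_pow (k := Nat.log 2 (Nat.card A) + 1) hrefl
      disjoint_reflections hrot disjoint_innerRotations (Nat.succ_pos _)
      (by rw [AddSubgroup.index_bot]; exact Nat.lt_pow_succ_log_self one_lt_two _) dvd_rfl
      (by omega) (by omega) (by omega)

end IsSaturated

end Endgame

theorem hasOneProdBlock {ι A : Type*} [Fintype ι] [AddCommGroup A] [Finite A] [IsAddCyclic A]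
    {w : ι → ℤ × A} (hodd : Odd (Nat.card A)) (hn : 3 ≤ Nat.card A)
    (hw : ∀ i, (w i).1 = 0 ∨ (w i).1 = 1)
    (hι : 2 * Nat.card A + Nat.log 2 (Nat.card A) ≤ Fintype.card ι) : HasOneProdBlock w := by
  classical
  obtain ⟨X, hX⟩ := exists_isReserve w
  obtain ⟨H, E, hE⟩ := exists_isSaturated hodd w X
  have three_le {d : ℕ} (hd : d ∣ Nat.card A) (hd1 : d ≠ 1) : 3 ≤ d := by
    have := Nat.pos_of_dvd_of_pos hd Nat.card_pos
    obtain ⟨r, hr⟩ := hodd.of_dvd_nat hd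
    omega
  by_cases hH : H = ⊤
  · subst hH
    have := Nat.log_pos one_lt_two (show 2 ≤ Nat.card A by omega)
    exact hE.hasOneProdBlock_of_top hX hw (by omega)
  have hm := three_le H.index_dvd_card (mt AddSubgroup.index_eq_one.1 hH)
  rcases (innerRotations w H E).eq_empty_or_nonempty with hR | hR
  · exact hE.hasOneProdBlock_of_innerRotations_eq_empty hX hodd hw hH hm hR hι
  by_cases hbot : H = ⊥
  · subst hbot
    exact hE.hasOneProdBlock_of_bot hX hw hH hR hι
  · exact hE.hasOneProdBlock_of_three_le_card hX hw hH hm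
      (three_le H.card_addSubgroup_dvd_card (mt AddSubgroup.card_eq_one.1 hbot)) hR hι

section Dihedral

open DihedralGroup

variable {n : ℕ} {ι : Type*}

/-- The code of an element of the dihedral group: the rotation `r a` is coded by `(0, a)` and the
reflection `sr a` by `(1, a)`. Products of rearrangements are described by signed sums of codes. -/
def dihedralCode : DihedralGroup n → ℤ × ZMod n
  | r a => (0, a)
  | sr a => (1, a)

theorem dihedralCode_fst_eq_zero_or_one (x : DihedralGroup n) :
    (dihedralCode x).1 = 0 ∨ (dihedralCode x).1 = 1 := by
  cases x <;> simp [dihedralCode]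

theorem dihedralCode_one : dihedralCode (1 : DihedralGroup n) = 0 := rfl

theorem exists_eq_map_r_add_map_sr (T : Multiset (DihedralGroup n)) :
    ∃ P X : Multiset (ZMod n), T = P.map r + X.map sr ∧
      (T.map dihedralCode).sum = ((X.card : ℤ), P.sum + X.sum) := by
  induction T using Multiset.induction with
  | empty => exact ⟨0, 0, by simp, by simp [← Prod.zero_eq_mk]⟩
  | cons x T ih =>
    obtain ⟨P, X, rfl, hsum⟩ := ih
    cases x with
    | r a => exact ⟨a ::ₘ P, X, by simp, by
      rw [Multiset.map_cons, Multiset.sum_cons, hsum]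
      simp [dihedralCode, add_assoc]⟩
    | sr a => exact ⟨P, a ::ₘ X, by simp, by
      rw [Multiset.map_cons, Multiset.sum_cons, hsum]
      simp [dihedralCode, add_comm, add_left_comm]⟩

theorem prod_map_r (l : List (ZMod n)) : (l.map r).prod = r l.sum := by
  induction l with
  | nil => simp
  | cons a l ih => simp [ih]

theorem exists_prod_eq_r_sum_sub_sum (X Y : List (ZMod n)) (h : X.length = Y.length) :
    ∃ l : List (DihedralGroup n), (l : Multiset (DihedralGroup n)) =
      (X : Multiset (ZMod n)).map sr + (Y : Multiset (ZMod n)).map sr ∧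
      l.prod = r (X.sum - Y.sum) := by
  induction X generalizing Y with
  | nil => exact ⟨[], by simp [List.length_eq_zero_iff.1 h.symm]⟩
  | cons x X ih =>
    obtain ⟨y, Y, rfl⟩ := List.exists_cons_of_length_eq_add_one h.symm
    obtain ⟨l, hl, hprod⟩ := ih Y (by simpa using h)
    refine ⟨sr y :: sr x :: l, ?_, ?_⟩
    · simp only [← Multiset.cons_coe, hl, Multiset.map_cons, Multiset.cons_add, Multiset.add_cons,
        Multiset.cons_swap]
    · rw [List.prod_cons, List.prod_cons, hprod, ← mul_assoc, sr_mul_sr, r_mul_r,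
        List.sum_cons, List.sum_cons, add_sub_add_comm]

theorem isOneProdSeq_of_sum_eq_sum {P M X Y : Multiset (ZMod n)} (hX : X ≠ 0)
    (hcard : X.card = Y.card) (hsum : P.sum + X.sum = M.sum + Y.sum) :
    IsOneProdSeq ((P.map r + X.map sr : Multiset (DihedralGroup n)) + (M.map r + Y.map sr)) := by
  have hY : Y ≠ 0 := by rwa [← Multiset.card_pos, ← hcard, Multiset.card_pos]
  obtain ⟨x, hx⟩ := Multiset.exists_mem_of_ne_zero hX
  obtain ⟨X, rfl⟩ := Multiset.exists_cons_of_mem hx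
  obtain ⟨y, hy⟩ := Multiset.exists_mem_of_ne_zero hY
  obtain ⟨Y, rfl⟩ := Multiset.exists_cons_of_mem hy
  induction P, M using Quotient.inductionOn₂ with | _ P M
  induction X, Y using Quotient.inductionOn₂ with | _ X Y
  simp only [Multiset.quot_mk_to_coe, Multiset.card_cons, Multiset.coe_card, Multiset.sum_cons,
    Multiset.sum_coe, Nat.add_right_cancel_iff] at hcard hsum ⊢
  obtain ⟨l, hl, hprod⟩ := exists_prod_eq_r_sum_sub_sum X Y hcard
  -- Placing the rotations of `M` between two reflections inverts them.
  refine ⟨P.map r ++ [sr y] ++ M.map r ++ [sr x] ++ l, ?_, ?_⟩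
  · simp only [← Multiset.coe_add, hl, ← Multiset.map_coe, ← Multiset.singleton_add,
      Multiset.coe_singleton, Multiset.map_add, Multiset.map_singleton]
    abel
  · simp only [List.prod_append, prod_map_r, hprod, List.prod_singleton, r_mul_sr, sr_mul_r,
      sr_mul_sr, r_mul_r, one_def]
    congr 1
    linear_combination hsum

theorem isOneProdSeq_add_of_map_sum_eq {S T : Multiset (DihedralGroup n)}
    (hsum : (S.map dihedralCode).sum = (T.map dihedralCode).sum)
    (hrefl : ∃ x ∈ S + T, (dihedralCode x).1 = 1) : IsOneProdSeq (S + T) := by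
  obtain ⟨P, X, rfl, hPX⟩ := exists_eq_map_r_add_map_sr S
  obtain ⟨M, Y, rfl, hMY⟩ := exists_eq_map_r_add_map_sr T
  rw [hPX, hMY, Prod.mk.injEq, Nat.cast_inj] at hsum
  refine isOneProdSeq_of_sum_eq_sum ?_ hsum.1 hsum.2
  rintro rfl
  obtain rfl : Y = 0 := Multiset.card_eq_zero.1 hsum.1.symm
  obtain ⟨x, hx, hx1⟩ := hrefl
  obtain ⟨a, -, rfl⟩ : ∃ a ∈ P + M, r a = x := by
    rw [← Multiset.mem_map, Multiset.map_add]
    simpa only [Multiset.map_zero, add_zero] using hx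
  simp [dihedralCode] at hx1

theorem isOneProdSeq_of_map_sum_eq_zero {T : Multiset (DihedralGroup n)}
    (hsum : (T.map dihedralCode).sum = 0) : IsOneProdSeq T := by
  obtain ⟨P, X, rfl, hPX⟩ := exists_eq_map_r_add_map_sr T
  rw [hPX, Prod.mk_eq_zero, Nat.cast_eq_zero, Multiset.card_eq_zero] at hsum
  obtain ⟨rfl, hP⟩ := hsum
  induction P using Quotient.inductionOn with | _ P
  exact ⟨P.map r, by simp, by
    rw [prod_map_r, one_def]
    exact congrArg r (by simpa using hP)⟩

theorem exists_isOneProdSeq_of_hasOneProdBlock {g : ι → DihedralGroup n}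
    (h : HasOneProdBlock (dihedralCode ∘ g)) :
    ∃ E : Finset ι, E.Nonempty ∧ n ∣ #E ∧ IsOneProdSeq (E.val.map g) := by
  classical
  obtain ⟨E, hE, hcard, h⟩ := h
  refine ⟨E, hE, by simpa using hcard, ?_⟩
  rcases h with ⟨hsum, i, hi, hgi⟩ | ⟨hfst, hsnd⟩
  · obtain ⟨F, hFE, hF⟩ := hsum.exists_subset
    have hval : E.val.map g = (E \ F).val.map g + F.val.map g := by
      rw [← Multiset.map_add, sdiff_val, tsub_add_cancel_of_le (val_le_iff.2 hFE)]
    rw [hval]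
    refine isOneProdSeq_add_of_map_sum_eq ?_ ⟨g i, ?_, hgi⟩
    · rw [Multiset.map_map, Multiset.map_map]
      exact sub_eq_zero.1 hF
    · rw [← hval]
      exact Multiset.mem_map_of_mem g hi
  · refine isOneProdSeq_of_map_sum_eq_zero ?_
    rw [Multiset.map_map]
    exact Prod.ext (by simpa [Prod.fst_sum] using sum_eq_zero hfst)
      (by simpa [Prod.snd_sum] using hsnd)

theorem exists_le_isOneProdSeq (hn : 3 ≤ n) (hodd : Odd n) {S : Multiset (DihedralGroup n)}
    (hS : 2 * n + Nat.log 2 n ≤ S.card) :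
    ∃ T, T ≤ S ∧ T ≠ 0 ∧ n ∣ T.card ∧ IsOneProdSeq T := by
  have : NeZero n := ⟨by omega⟩
  induction S using Quotient.inductionOn with | _ l
  obtain ⟨E, hE, hcard, hT⟩ := exists_isOneProdSeq_of_hasOneProdBlock (g := l.get)
    (hasOneProdBlock (by simpa) (by simpa) (fun i => dihedralCode_fst_eq_zero_or_one _)
      (by simpa using hS))
  refine ⟨_, ?_, ?_, by simpa using hcard, hT⟩
  · have hle := Multiset.map_le_map (f := l.get) (val_le_iff.2 (subset_univ E))
    rwa [Fin.univ_val_map, List.ofFn_get] at hle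
  · simpa using hE.ne_empty

theorem exists_dihedralCode_mul_snd (x y : DihedralGroup n) :
    ∃ u : ℤˣ, (dihedralCode (x * y)).2 = u • (dihedralCode x).2 + (dihedralCode y).2 := by
  cases x <;> cases y
  · exact ⟨1, by simp [dihedralCode]⟩
  · exact ⟨-1, by simp only [dihedralCode, r_mul_sr, Units.neg_smul, one_smul]; ring⟩
  · exact ⟨1, by simp [dihedralCode]⟩
  · exact ⟨-1, by simp only [dihedralCode, sr_mul_sr, Units.neg_smul, one_smul]; ring⟩

theorem isSignedSum_dihedralCode_prod_snd {g : ι → DihedralGroup n} (l : List (DihedralGroup n))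
    {D : Finset ι} (h : (l : Multiset (DihedralGroup n)) = D.val.map g) :
    IsSignedSum (fun i => (dihedralCode (g i)).2) D (dihedralCode l.prod).2 := by
  classical
  induction l generalizing D with
  | nil =>
    obtain rfl : D = ∅ := by simpa using h.symm
    simpa [dihedralCode_one] using IsSignedSum.empty _
  | cons x l ih =>
    have hx : x ∈ D.val.map g := by simp [← h]
    obtain ⟨i, hi, rfl⟩ := Multiset.mem_map.1 hx
    obtain ⟨u, hu⟩ := exists_dihedralCode_mul_snd (g i) l.prod
    rw [← insert_erase hi, insert_val_of_notMem (notMem_erase i D), Multiset.map_cons,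
      ← Multiset.cons_coe, Multiset.cons_inj_right] at h
    rw [List.prod_cons, hu, ← insert_erase hi]
    exact ((IsSignedSum.singleton _ i).units_smul u).add (ih h) (by simp)

theorem eq_empty_of_isSignedSum_two_pow {k : ℕ} {E : Finset ℕ} (hk : 2 ^ k ≤ n)
    (hE : ∀ i ∈ E, i < k) (h : IsSignedSum (fun i => (2 ^ i : ZMod n)) E 0) : E = ∅ := by
  obtain ⟨F, hFE, hF⟩ := h.exists_subset
  have hlt {D : Finset ℕ} (hD : D ⊆ E) : ∑ i ∈ D, 2 ^ i < n :=
    (Nat.geomSum_lt le_rfl fun i hi => hE i (hD hi)).trans_le hk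
  have hmod : ((∑ i ∈ E \ F, 2 ^ i : ℕ) : ZMod n) = (∑ i ∈ F, 2 ^ i : ℕ) := by
    simpa using sub_eq_zero.1 hF
  rw [ZMod.natCast_eq_natCast_iff] at hmod
  have hEF : E \ F = F :=
    geomSum_injective le_rfl (hmod.eq_of_lt_of_lt (hlt sdiff_subset) (hlt hFE))
  have hF0 : F = ∅ := by simpa [hEF] using (disjoint_sdiff (s := F) (t := E))
  rwa [hF0, sdiff_empty] at hEF

theorem exists_subset_eq_map_val {α β : Type*} {f : α → β} {T : Multiset β} {s : Finset α}
    (h : T ≤ s.val.map f) : ∃ t ⊆ s, T = t.val.map f := by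
  obtain ⟨l, hl⟩ := Quotient.exists_rep s.val
  induction T using Quotient.inductionOn with | _ m
  rw [← hl] at h
  obtain ⟨m', hperm, hsub⟩ : (m : Multiset β) ≤ (l.map f : List β) := h
  obtain ⟨l', hl', rfl⟩ := List.sublist_map_iff.1 hsub
  have hle : (l' : Multiset α) ≤ s.val := hl ▸ hl'.subperm
  exact ⟨⟨l', Multiset.nodup_of_le hle s.nodup⟩, val_le_iff.1 hle,
    (Multiset.coe_eq_coe.2 hperm).symm⟩

/-- The extremal sequence: the rotations `r 1, r 2, r 4, …` whose exponents are the first `⌊log₂ n⌋`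
powers of `2`, followed by the reflection `sr 0` repeated. -/
def extremalTerm (n i : ℕ) : DihedralGroup n :=
  if i < Nat.log 2 n then r (2 ^ i) else sr 0

theorem log_le_of_isOneProdSeq_map_extremalTerm (hn : n ≠ 0) {D : Finset ℕ}
    (hD : IsOneProdSeq (D.val.map (extremalTerm n))) : ∀ i ∈ D, Nat.log 2 n ≤ i := by
  obtain ⟨l, hl, hprod⟩ := hD
  obtain ⟨ε, hε⟩ := isSignedSum_dihedralCode_prod_snd l hl
  have hsnd (i : ℕ) : (dihedralCode (extremalTerm n i)).2 =
      if i < Nat.log 2 n then 2 ^ i else 0 := by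
    unfold extremalTerm
    split_ifs <;> rfl
  have hempty : {i ∈ D | i < Nat.log 2 n} = ∅ :=
    eq_empty_of_isSignedSum_two_pow (Nat.pow_log_le_self 2 hn) (by simp) ⟨ε, by
      rw [hprod] at hε
      simpa [hsnd, sum_filter, dihedralCode_one] using hε⟩
  simpa [filter_eq_empty_iff] using hempty

theorem exists_card_add_one_eq_forall_eq_zero (hodd : Odd n) :
    ∃ S : Multiset (DihedralGroup n), S.card + 1 = 2 * n + Nat.log 2 n ∧
      ∀ T ≤ S, n ∣ T.card → IsOneProdSeq T → T = 0 := by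
  have hn := hodd.pos
  refine ⟨(range (2 * n + Nat.log 2 n - 1)).val.map (extremalTerm n), ?_, ?_⟩
  · rw [Multiset.card_map, card_val, card_range]
    omega
  intro T hTS hcard hT
  obtain ⟨D, hD, rfl⟩ := exists_subset_eq_map_val hTS
  have hlog := log_le_of_isOneProdSeq_map_extremalTerm hn.ne' hT
  have hDcard : #D ≤ 2 * n - 1 := by
    have := card_le_card fun i hi => mem_Ico.2 ⟨hlog i hi, mem_range.1 (hD hi)⟩
    rw [Nat.card_Ico] at this
    omega
  have hrep : D.val.map (extremalTerm n) = Multiset.replicate #D (sr 0) :=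
    Multiset.eq_replicate.2 ⟨by simp, fun x hx => by
      obtain ⟨i, hi, rfl⟩ := Multiset.mem_map.1 hx
      exact if_neg (hlog i hi).not_gt⟩
  have htwo : 2 ∣ #D := by
    obtain ⟨l, hl, hprod⟩ := hT
    rw [hrep, ← Multiset.coe_replicate, Multiset.coe_eq_coe, List.perm_replicate] at hl
    rwa [hl, List.prod_replicate, ← orderOf_dvd_iff_pow_eq_one, orderOf_sr] at hprod
  have hdvd : 2 * n ∣ #D :=
    (Nat.coprime_two_left.2 hodd).mul_dvd_of_dvd_of_dvd htwo (by simpa using hcard)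
  have := Nat.eq_zero_of_dvd_of_lt hdvd (by omega)
  rw [hrep, this, Multiset.replicate_zero]

end Dihedral

/-- Let `n ≥ 3` be odd.  Then `s_{nℕ}(D_{2n}) = 2n + ⌊log₂ n⌋`. -/
theorem stmt16 (n : ℕ) (hn : 3 ≤ n) (hodd : Odd n) :
    IsLeast {ℓ : ℕ | ∀ S : Multiset (DihedralGroup n), ℓ ≤ Multiset.card S →
        ∃ T, T ≤ S ∧ T ≠ 0 ∧ n ∣ Multiset.card T ∧ IsOneProdSeq T}
      (2 * n + Nat.log 2 n) := by
  refine ⟨fun S hS => exists_le_isOneProdSeq hn hodd hS, fun ℓ hℓ => ?_⟩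
  obtain ⟨S, hS, hS0⟩ := exists_card_add_one_eq_forall_eq_zero hodd
  by_contra! hlt
  obtain ⟨T, hTS, hT0, hcard, hT⟩ := hℓ S (by omega)
  exact hT0 (hS0 T hTS hcard hT)
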